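/- arXiv:1603.06229 — 7 statements merged into one kernel-verified Lean document; each statement's English description precedes it below -/
import Mathlib

section
/- (Riesz–Herglotz theorem for the trigonometric moment problem.) Let t : ℤ → ℂ. One has Σ_{n,m ≥ 0} t_{n−m} g_m conj(g_n) ≥ 0 for every finitely supported sequence g : ℕ → ℂ if and only if there exists a finite non-negative Borel measure M on the unit circle 𝕋 such that t_n = ∫_𝕋 z^{−n} dM(z) for all n ∈ ℤ. -/
/-! The easy direction is `t[g,g] = ∫ |∑ gₘ zᵐ|² dM`.

For the converse, testing the form on the truncated geometric sequence `gₘ = z⁻ᵐ`, `m < N`, shows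
that the Fejér-type sum `∑_{n,m<N} t_{n-m} zⁿ⁻ᵐ` is non-negative on the circle. Weighting the
`2N`-th roots of unity by `1/(2N²)` times its values gives a finite measure `fejerMeasure t N`.
Since `|n - m - k| < 2N` whenever `|k| ≤ N`, orthogonality of roots of unity yields
`∫ z⁻ᵏ = (1 - |k|/N) tₖ` exactly (`integral_fejerMeasure`). All these measures have mass `t₀`, so by
weak compactness of bounded sets of measures on a compact space they have a limit along an
ultrafilter, and its moments are `lim (1 - |k|/N) tₖ = tₖ`. Discrete measures take the place of the
densities with respect to Haar measure, so only finite sums have to be computed. -/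

open MeasureTheory Filter Finset ComplexConjugate
open scoped ComplexOrder

noncomputable section

instance : MeasurableSpace Circle := borel Circle
instance : BorelSpace Circle := ⟨rfl⟩

/-- The normalized Lebesgue (Haar) probability measure `m` on the unit circle `𝕋 = Circle`. -/
def haarT : Measure Circle :=
  (ENNReal.ofReal (2 * Real.pi))⁻¹ •
    (volume.restrict (Set.Ioc 0 (2 * Real.pi))).map Circle.exp

/-- The Toeplitz quadratic form `t[g,g] = Σ_{n,m ≥ 0} t_{n-m} g_m conj (g_n)` on the set `𝒟`
of finitely supported sequences `g : ℕ → ℂ`. -/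
def toeplitzForm (t : ℤ → ℂ) (g : ℕ →₀ ℂ) : ℂ :=
  ∑ n ∈ g.support, ∑ m ∈ g.support, t ((n : ℤ) - (m : ℤ)) * g m * conj (g n)

/-- The support in the Toeplitz form may be replaced by any larger finite set. -/
lemma toeplitzForm_eq_sum (t : ℤ → ℂ) (g : ℕ →₀ ℂ) (s : Finset ℕ) (hs : g.support ⊆ s) :
    toeplitzForm t g = ∑ n ∈ s, ∑ m ∈ s, t ((n : ℤ) - (m : ℤ)) * g m * conj (g n) := by
  unfold toeplitzForm
  rw [Finset.sum_subset hs]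
  · refine Finset.sum_congr rfl fun n _ => Finset.sum_subset hs ?_
    intro m _ hm
    simp [Finsupp.notMem_support_iff.1 hm]
  · intro n _ hn
    simp [Finsupp.notMem_support_iff.1 hn]

lemma integrable_circle (M : Measure Circle) [IsFiniteMeasure M] {f : Circle → ℂ}
    (hf : Continuous f) : Integrable f M :=
  hf.integrable_of_hasCompactSupport (HasCompactSupport.of_compactSpace f)

lemma continuous_circle_zpow (k : ℤ) : Continuous fun z : Circle => (z : ℂ) ^ k :=
  Continuous.zpow₀ (by fun_prop) k fun z => Or.inl z.coe_ne_zero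

lemma toeplitzForm_nonneg_of_moments (t : ℤ → ℂ) (M : Measure Circle) [IsFiniteMeasure M]
    (h : ∀ n : ℤ, t n = ∫ z, (z : ℂ) ^ (-n) ∂M) (g : ℕ →₀ ℂ) : 0 ≤ toeplitzForm t g := by
  have key : toeplitzForm t g =
      ∫ z : Circle, ((‖∑ m ∈ g.support, g m * (z : ℂ) ^ m‖ ^ 2 : ℝ) : ℂ) ∂M := by
    have hpt : ∀ z : Circle, ((‖∑ m ∈ g.support, g m * (z : ℂ) ^ m‖ ^ 2 : ℝ) : ℂ) =
        ∑ n ∈ g.support, ∑ m ∈ g.support,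
          (z : ℂ) ^ (-((n : ℤ) - (m : ℤ))) * (g m * conj (g n)) := by
      intro z
      have hz := z.coe_ne_zero
      rw [Complex.ofReal_pow, ← Complex.mul_conj', map_sum, Finset.sum_mul_sum, Finset.sum_comm]
      refine Finset.sum_congr rfl fun n _ => Finset.sum_congr rfl fun m _ => ?_
      rw [map_mul, map_pow, ← Circle.coe_inv_eq_conj, neg_sub, zpow_sub₀ hz]
      simp only [zpow_natCast, Circle.coe_inv, inv_pow]
      field_simp
    have hi : ∀ n m : ℕ, Integrable (fun z : Circle =>
        (z : ℂ) ^ (-((n : ℤ) - (m : ℤ))) * (g m * conj (g n))) M := fun n m =>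
      (integrable_circle M (continuous_circle_zpow _)).mul_const _
    simp_rw [hpt]
    rw [integral_finsetSum _ fun n _ => integrable_finsetSum _ fun m _ => hi n m]
    refine Finset.sum_congr rfl fun n _ => ?_
    rw [integral_finsetSum _ fun m _ => hi n m]
    refine Finset.sum_congr rfl fun m _ => ?_
    rw [integral_mul_const, ← h, mul_assoc]
  rw [key, integral_complex_ofReal]
  exact Complex.zero_le_real.2 (integral_nonneg fun z => by positivity)

/-- The truncated geometric sequence `m ↦ z⁻ᵐ`, `m < N`. -/
def geomSeq (N : ℕ) (z : Circle) : ℕ →₀ ℂ :=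
  Finsupp.onFinset (range N) (fun m => if m < N then (z : ℂ) ^ (-(m : ℤ)) else 0) (by
    intro m hm
    by_contra h
    simp_all)

lemma toeplitzForm_geomSeq (t : ℤ → ℂ) (N : ℕ) (z : Circle) :
    toeplitzForm t (geomSeq N z) =
      ∑ n ∈ range N, ∑ m ∈ range N, t ((n : ℤ) - m) * (z : ℂ) ^ ((n : ℤ) - m) := by
  rw [toeplitzForm_eq_sum t (geomSeq N z) (range N) Finsupp.support_onFinset_subset]
  refine Finset.sum_congr rfl fun n hn => Finset.sum_congr rfl fun m hm => ?_
  have hz := z.coe_ne_zero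
  simp only [geomSeq, Finsupp.onFinset_apply, Finset.mem_range.1 hn, Finset.mem_range.1 hm, if_true]
  rw [map_zpow₀, ← Circle.coe_inv_eq_conj, mul_assoc, sub_eq_add_neg, zpow_add₀ hz]
  simp [mul_comm]

/-- The primitive `K`-th root of unity `exp (2πi/K)` as a point of the circle. -/
def rootT (K : ℕ) : Circle := Circle.exp (2 * Real.pi / K)

lemma isPrimitiveRoot_rootT (K : ℕ) (hK : K ≠ 0) : IsPrimitiveRoot (rootT K : ℂ) K := by
  have h := Complex.isPrimitiveRoot_exp K hK
  convert h using 1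
  rw [rootT, Circle.coe_exp]
  push_cast
  congr 1
  ring

/-- Orthogonality of the characters of `ℤ/K`. -/
lemma sum_rootT_zpow (K : ℕ) (hK : K ≠ 0) (l : ℤ) :
    ∑ j ∈ range K, ((rootT K ^ j : Circle) : ℂ) ^ l = if (K : ℤ) ∣ l then (K : ℂ) else 0 := by
  have hp := isPrimitiveRoot_rootT K hK
  have hs : ∀ j : ℕ, ((rootT K ^ j : Circle) : ℂ) ^ l = ((rootT K : ℂ) ^ l) ^ j := by
    intro j
    rw [Circle.coe_pow, ← zpow_natCast, ← zpow_natCast, ← zpow_mul, ← zpow_mul, mul_comm]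
  simp_rw [hs]
  split_ifs with hd
  · simp [(hp.zpow_eq_one_iff_dvd l).2 hd]
  · have hne : (rootT K : ℂ) ^ l ≠ 1 := fun h => hd ((hp.zpow_eq_one_iff_dvd l).1 h)
    rw [geom_sum_eq hne, ← hs]
    simp [Circle.coe_pow, hp.pow_eq_one]

lemma card_filter_sub_eq (N : ℕ) (k : ℤ) :
    #{p ∈ range N ×ˢ range N | (p.1 : ℤ) - p.2 = k} = N - k.natAbs := by
  rcases Int.eq_nat_or_neg k with ⟨a, rfl | rfl⟩
  · have : {p ∈ range N ×ˢ range N | (p.1 : ℤ) - p.2 = a} =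
        (range (N - a)).image fun i => (i + a, i) := by
      ext ⟨n, m⟩
      simp only [mem_filter, mem_product, mem_range, mem_image, Prod.mk.injEq]
      constructor
      · intro h
        exact ⟨m, by omega, by omega, rfl⟩
      · rintro ⟨i, h1, h2, h3⟩
        omega
    rw [this, card_image_of_injective _ fun i j h => by simpa using h]
    simp
  · have : {p ∈ range N ×ˢ range N | (p.1 : ℤ) - p.2 = -a} =
        (range (N - a)).image fun i => (i, i + a) := by
      ext ⟨n, m⟩
      simp only [mem_filter, mem_product, mem_range, mem_image, Prod.mk.injEq]
      constructor
      · intro h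
        exact ⟨n, by omega, rfl, by omega⟩
      · rintro ⟨i, h1, h2, h3⟩
        omega
    rw [this, card_image_of_injective _ fun i j h => by
      simp only [Prod.mk.injEq] at h
      exact h.1]
    simp

/-- The measure on the `2N`-th roots of unity whose mass at `ζ` is
`(1 / 2N²) ∑_{n,m<N} t_{n-m} ζⁿ⁻ᵐ`. The real part and `ENNReal.ofReal` lose nothing when the
Toeplitz form of `t` is non-negative. -/
def fejerMeasure (t : ℤ → ℂ) (N : ℕ) : Measure Circle :=
  ∑ j ∈ range (2 * N),
    ENNReal.ofReal ((toeplitzForm t (geomSeq N (rootT (2 * N) ^ j))).re / (N * (2 * N : ℕ))) •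
      Measure.dirac (rootT (2 * N) ^ j)

instance (t : ℤ → ℂ) (N : ℕ) : IsFiniteMeasure (fejerMeasure t N) := by
  constructor
  simp only [fejerMeasure, Measure.coe_finsetSum, Finset.sum_apply, Measure.smul_apply,
    smul_eq_mul]
  exact ENNReal.sum_lt_top.2 fun j _ => ENNReal.mul_lt_top ENNReal.ofReal_lt_top
    (measure_lt_top _ _)

lemma integral_fejerMeasure (t : ℤ → ℂ) (ht : ∀ g : ℕ →₀ ℂ, 0 ≤ toeplitzForm t g) (N : ℕ)
    (hN : N ≠ 0) (k : ℤ) (hk : k.natAbs ≤ N) :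
    ∫ z, (z : ℂ) ^ (-k) ∂(fejerMeasure t N) = (1 - (k.natAbs : ℂ) / N) * t k := by
  have hK : 2 * N ≠ 0 := by omega
  have hKC : ((2 * N : ℕ) : ℂ) ≠ 0 := by exact_mod_cast hK
  have hNC : (N : ℂ) ≠ 0 := by exact_mod_cast hN
  have h1 : ∫ z, (z : ℂ) ^ (-k) ∂(fejerMeasure t N) = ∑ j ∈ range (2 * N),
      toeplitzForm t (geomSeq N (rootT (2 * N) ^ j)) / (N * (2 * N : ℕ)) *
        ((rootT (2 * N) ^ j : Circle) : ℂ) ^ (-k) := by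
    rw [fejerMeasure, integral_finsetSum_measure]
    · refine Finset.sum_congr rfl fun j _ => ?_
      obtain ⟨hre, him⟩ := Complex.nonneg_iff.1 (ht (geomSeq N (rootT (2 * N) ^ j)))
      have hreal : ((toeplitzForm t (geomSeq N (rootT (2 * N) ^ j))).re : ℂ) =
          toeplitzForm t (geomSeq N (rootT (2 * N) ^ j)) := Complex.ext (by simp) (by simp [him])
      rw [integral_smul_measure, integral_dirac, ENNReal.toReal_ofReal (by positivity),
        Complex.real_smul]
      push_cast
      rw [hreal]
    · intro j _
      exact (integrable_circle _ (continuous_circle_zpow _)).smul_measure ENNReal.ofReal_ne_top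
  have h2 : ∀ n ∈ range N, ∀ m ∈ range N,
      ((2 * N : ℕ) : ℤ) ∣ (n : ℤ) - m - k ↔ (n : ℤ) - m = k := by
    intro n hn m hm
    rw [mem_range] at hn hm
    constructor
    · intro hd
      have := Int.eq_zero_of_abs_lt_dvd hd (by rw [abs_lt]; omega)
      omega
    · intro h
      simp [h]
  calc ∫ z, (z : ℂ) ^ (-k) ∂(fejerMeasure t N)
      = ∑ j ∈ range (2 * N), ∑ n ∈ range N, ∑ m ∈ range N, t ((n : ℤ) - m) / (N * (2 * N : ℕ)) *
          ((rootT (2 * N) ^ j : Circle) : ℂ) ^ ((n : ℤ) - m - k) := by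
        rw [h1]
        refine Finset.sum_congr rfl fun j _ => ?_
        rw [toeplitzForm_geomSeq, Finset.sum_div, Finset.sum_mul]
        refine Finset.sum_congr rfl fun n _ => ?_
        rw [Finset.sum_div, Finset.sum_mul]
        refine Finset.sum_congr rfl fun m _ => ?_
        rw [sub_eq_add_neg _ k, zpow_add₀ (Circle.coe_ne_zero _)]
        ring
    _ = ∑ n ∈ range N, ∑ m ∈ range N, if (n : ℤ) - m = k then t k / N else 0 := by
        rw [Finset.sum_comm]
        refine Finset.sum_congr rfl fun n hn => ?_
        rw [Finset.sum_comm]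
        refine Finset.sum_congr rfl fun m hm => ?_
        rw [← Finset.mul_sum, sum_rootT_zpow _ hK]
        simp only [h2 n hn m hm]
        split_ifs with h
        · rw [h]
          field_simp
        · simp
    _ = (1 - (k.natAbs : ℂ) / N) * t k := by
        rw [← Finset.sum_product', ← Finset.sum_filter, Finset.sum_const, card_filter_sub_eq,
          nsmul_eq_mul, Nat.cast_sub hk]
        field_simp

lemma exists_measure_of_toeplitzForm_nonneg (t : ℤ → ℂ)
    (ht : ∀ g : ℕ →₀ ℂ, 0 ≤ toeplitzForm t g) :
    ∃ M : Measure Circle, IsFiniteMeasure M ∧ ∀ n : ℤ, t n = ∫ z, (z : ℂ) ^ (-n) ∂M := by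
  let μs : ℕ → FiniteMeasure Circle := fun N => ⟨fejerMeasure t (N + 1), inferInstance⟩
  have hmass : ∀ N, (μs N).mass ≤ ‖t 0‖₊ := by
    intro N
    have h := integral_fejerMeasure t ht (N + 1) N.succ_ne_zero 0 (by simp)
    simp only [neg_zero, zpow_zero, integral_const, Int.natAbs_zero, Nat.cast_zero, zero_div,
      sub_zero, one_mul, Complex.real_smul, mul_one] at h
    have : ((μs N).mass : ℝ) = (fejerMeasure t (N + 1)).real Set.univ := rfl
    rw [← NNReal.coe_le_coe, this, coe_nnnorm, ← h, Complex.norm_real]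
    exact Real.le_norm_self _
  -- Weak convergence along an ultrafilter refining `atTop` replaces passing to a subsequence.
  let U : Ultrafilter ℕ := Ultrafilter.of atTop
  have hU : (U : Filter ℕ) ≤ atTop := Ultrafilter.of_le atTop
  obtain ⟨μ, -, hμ⟩ := (isCompact_setOfPred_finiteMeasure_le_of_compactSpace Circle
    ‖t 0‖₊).ultrafilter_le_nhds (U.map μs) (by
      rw [le_principal_iff]
      exact Filter.mem_map.2 (Filter.Eventually.of_forall hmass))
  have hlim : Tendsto μs U (nhds μ) := hμ
  refine ⟨μ, inferInstance, fun k => ?_⟩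
  have hA := (FiniteMeasure.tendsto_iff_forall_integral_rclike_tendsto ℂ).1 hlim
    (BoundedContinuousFunction.mkOfCompact ⟨_, continuous_circle_zpow (-k)⟩)
  have hB : Tendsto (fun N : ℕ => (1 - (k.natAbs : ℂ) / ((N + 1 : ℕ) : ℂ)) * t k) U
      (nhds (t k)) := by
    have h0 : Tendsto (fun N : ℕ => (k.natAbs : ℂ) / ((N + 1 : ℕ) : ℂ)) atTop (nhds 0) :=
      (tendsto_const_div_atTop_nhds_zero_nat (k.natAbs : ℂ)).comp (tendsto_add_atTop_nat 1)
    simpa using ((h0.const_sub 1).mul_const (t k)).mono_left hU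
  refine tendsto_nhds_unique (hB.congr' ?_) hA
  filter_upwards [hU (eventually_ge_atTop k.natAbs)] with N hN
  exact (integral_fejerMeasure t ht (N + 1) N.succ_ne_zero k (by omega)).symm

/-- **The F. Riesz–Herglotz theorem** for the trigonometric moment problem:
the Toeplitz form is non-negative if and only if the `tₙ` are the moments of a finite
non-negative Borel measure `M` on the unit circle. -/
theorem riesz_herglotz (t : ℤ → ℂ) :
    (∀ g : ℕ →₀ ℂ, 0 ≤ toeplitzForm t g) ↔
    (∃ M : Measure Circle, IsFiniteMeasure M ∧
        ∀ n : ℤ, t n = ∫ z, (z : ℂ) ^ (-n) ∂M) := by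
  exact ⟨exists_measure_of_toeplitzForm_nonneg t, fun ⟨M, _, h⟩ =>
    toeplitzForm_nonneg_of_moments t M h⟩
end
end

section
/- (Main theorem.) Let γ > 0 and let t : ℤ → ℂ satisfy t_{−n} = conj(t_n) for all n ∈ ℤ and t[g,g] ≥ γ‖g‖² for all g ∈ 𝒟. Let M be a finite non-negative Borel measure on 𝕋 such that t_n = ∫_𝕋 z^{−n} dM(z) for all n ∈ ℤ (such a measure exists by the Riesz–Herglotz theorem). Then the form t[g,g] is closable in ℓ²(ℤ₊) if and only if M is absolutely continuous with respect to the normalized Lebesgue measure m on 𝕋. -/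
/-!
Write `P_g(z) = Σ_n g_n z ^ n`. Expanding the square gives `t[g,g] = ∫ |P_g|² dM`
(`toeplitzForm_eq_integral`), and the same identity for Lebesgue measure is Parseval's formula
`‖g‖² = ∫ |P_g|² dm`. Closability therefore says: a sequence of analytic polynomials that tends to
zero in `L²(m)` and is Cauchy in `L²(M)` tends to zero in `L²(M)` (`formClosable_iff`).

If `M ≪ m`, a subsequence tends to zero `m`-a.e., hence `M`-a.e., so the `L²(M)`-limit is zero
(`tendsto_of_absolutelyContinuous`).

Conversely, let `E` be an `m`-null set carrying the singular part of `M`. For compact `K ⊆ E` there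
are analytic polynomials that are uniformly bounded, close to `1` on `K` and small in `L²(m)`
(`exists_peaking_polynomial`): take a polynomial `F` whose real part is non-negative on the circle,
large on `K` and of small mean, and approximate `1 - exp (-F)`. By the mean value property
`∫ exp (-F) dm = exp (-F 0)` is close to `1` while `|exp (-F)| ≤ 1`, which forces `exp (-F)` to be
close to `1` in `L²(m)`. Letting `K` exhaust `E`, a subsequence of these polynomials tends to the
indicator of `E` `M`-a.e. and boundedly. Closability then gives `M(E) = 0`, that is, `M ≪ m`
(`absolutelyContinuous_of_closable`).
-/

open MeasureTheory Filter Finset ComplexConjugate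
open scoped ComplexOrder

noncomputable section

/-- The `ℓ²(ℤ₊)` norm of a finitely supported sequence. -/
def l2norm (g : ℕ →₀ ℂ) : ℝ := Real.sqrt (∑ n ∈ g.support, ‖g n‖ ^ 2)

/-- A quadratic form `Q` on the finitely supported sequences is closable in `ℓ²(ℤ₊)` if for every
sequence `g⁽ᵏ⁾` in `𝒟` with `‖g⁽ᵏ⁾‖ → 0` and `Q[g⁽ᵏ⁾ - g⁽ˡ⁾] → 0` as `k, l → ∞` one has
`Q[g⁽ᵏ⁾] → 0`. -/
def FormClosable (Q : (ℕ →₀ ℂ) → ℂ) : Prop :=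
  ∀ g : ℕ → (ℕ →₀ ℂ),
    Tendsto (fun k => l2norm (g k)) atTop (nhds 0) →
    Tendsto (fun p : ℕ × ℕ => Q (g p.1 - g p.2)) atTop (nhds 0) →
    Tendsto (fun k => Q (g k)) atTop (nhds 0)

/-! ### Trigonometric polynomials and the Toeplitz form -/

/-- The function `z ↦ Σ_n g_n z ^ n` on the circle attached to a finitely supported sequence. -/
def symbolFun (g : ℕ →₀ ℂ) (z : Circle) : ℂ := g.sum fun n a => a * (z : ℂ) ^ n

lemma continuous_symbolFun (g : ℕ →₀ ℂ) : Continuous (symbolFun g) := by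
  unfold symbolFun Finsupp.sum
  fun_prop

lemma symbolFun_sub (g h : ℕ →₀ ℂ) (z : Circle) :
    symbolFun (g - h) z = symbolFun g z - symbolFun h z := by
  unfold symbolFun
  exact Finsupp.sum_sub_index (fun n a b => by ring)

/-- The coefficient sequence of a polynomial, as an element of `𝒟`. -/
def coeffSeq (p : Polynomial ℂ) : ℕ →₀ ℂ :=
  Finsupp.onFinset p.support p.coeff fun n hn => by simpa using hn

lemma symbolFun_coeffSeq (p : Polynomial ℂ) (z : Circle) :
    symbolFun (coeffSeq p) z = p.eval (z : ℂ) := by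
  unfold symbolFun coeffSeq
  rw [Finsupp.onFinset_sum _ (fun n => by simp), Polynomial.eval_eq_sum, Polynomial.sum]

lemma integrable_of_cont {E : Type*} [NormedAddCommGroup E] {M : Measure Circle}
    [IsFiniteMeasure M] {f : Circle → E} (hf : Continuous f) : Integrable f M := by
  rw [← integrableOn_univ]
  exact hf.continuousOn.integrableOn_compact isCompact_univ

/-- If `t` is the moment sequence of `M`, then `t[g,g] = ∫ |Σ g_n z ^ n|² dM`. -/
lemma toeplitzForm_eq_integral (t : ℤ → ℂ) (M : Measure Circle) [IsFiniteMeasure M]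
    (hmom : ∀ n : ℤ, t n = ∫ z, (z : ℂ) ^ (-n) ∂M) (g : ℕ →₀ ℂ) :
    toeplitzForm t g = ((∫ z, ‖symbolFun g z‖ ^ 2 ∂M : ℝ) : ℂ) := by
  have hz : ∀ k : ℤ, Continuous fun z : Circle => (z : ℂ) ^ k := fun k =>
    Continuous.zpow₀ (by fun_prop) k (fun z => Or.inl (Circle.coe_ne_zero z))
  have key : ∀ z : Circle, ((‖symbolFun g z‖ ^ 2 : ℝ) : ℂ) =
      ∑ n ∈ g.support, ∑ m ∈ g.support,
        (z : ℂ) ^ (-((n : ℤ) - (m : ℤ))) * g m * conj (g n) := by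
    intro z
    have h1 : ((‖symbolFun g z‖ ^ 2 : ℝ) : ℂ) = symbolFun g z * conj (symbolFun g z) := by
      rw [Complex.mul_conj, Complex.normSq_eq_norm_sq]
    rw [h1]
    unfold symbolFun Finsupp.sum
    rw [map_sum, Finset.sum_mul_sum, Finset.sum_comm]
    refine Finset.sum_congr rfl fun n _ => Finset.sum_congr rfl fun m _ => ?_
    rw [map_mul, map_pow, ← Circle.coe_inv_eq_conj, neg_sub, zpow_sub₀ (Circle.coe_ne_zero z),
      zpow_natCast, zpow_natCast, Circle.coe_inv, inv_pow]
    field_simp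
  rw [← integral_complex_ofReal]
  simp_rw [key]
  unfold toeplitzForm
  rw [integral_finsetSum _ fun n _ => integrable_of_cont (by
    refine continuous_finsetSum _ fun m _ => ?_
    exact ((hz _).mul continuous_const).mul continuous_const)]
  refine Finset.sum_congr rfl fun n _ => ?_
  rw [integral_finsetSum _ fun m _ => integrable_of_cont (by
    exact ((hz _).mul continuous_const).mul continuous_const)]
  refine Finset.sum_congr rfl fun m _ => ?_
  rw [hmom, integral_mul_const, integral_mul_const]

instance : IsProbabilityMeasure haarT := by
  constructor
  have hpi : (0 : ℝ) < 2 * Real.pi := by positivity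
  rw [haarT, Measure.smul_apply, Measure.map_apply Circle.exp.continuous.measurable .univ]
  simp only [Set.preimage_univ, Measure.restrict_apply_univ, Real.volume_Ioc, sub_zero, smul_eq_mul]
  exact ENNReal.inv_mul_cancel (by simpa using hpi) ENNReal.ofReal_ne_top

lemma integral_haarT (f : Circle → ℂ) (hf : Continuous f) :
    ∫ z, f z ∂haarT = ((2 * Real.pi)⁻¹ : ℝ) • ∫ x in (0 : ℝ)..(2 * Real.pi), f (Circle.exp x) := by
  have hpi : (0 : ℝ) < 2 * Real.pi := by positivity
  rw [haarT, integral_smul_measure, integral_map Circle.exp.continuous.aemeasurable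
    hf.aestronglyMeasurable, intervalIntegral.integral_of_le hpi.le, ENNReal.toReal_inv,
    ENNReal.toReal_ofReal hpi.le]

lemma integral_zpow_haarT (n : ℤ) :
    ∫ z : Circle, (z : ℂ) ^ n ∂haarT = if n = 0 then 1 else 0 := by
  split_ifs with h
  · simp [h]
  · rw [integral_haarT _ (Continuous.zpow₀ (by fun_prop) n
      (fun z => Or.inl (Circle.coe_ne_zero z)))]
    have hc : (n : ℂ) * Complex.I ≠ 0 := mul_ne_zero (by exact_mod_cast h) Complex.I_ne_zero
    have : ∀ x : ℝ, ((Circle.exp x : Circle) : ℂ) ^ n = Complex.exp (n * Complex.I * x) := by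
      intro x
      rw [Circle.coe_exp, ← Complex.exp_int_mul]
      ring_nf
    simp_rw [this]
    rw [integral_exp_mul_complex hc]
    have e : (n : ℂ) * Complex.I * ((2 * Real.pi : ℝ) : ℂ) = n * (2 * Real.pi * Complex.I) := by
      push_cast; ring
    rw [e, Complex.exp_int_mul_two_pi_mul_I]
    simp

lemma l2norm_sq_eq_integral (g : ℕ →₀ ℂ) :
    l2norm g ^ 2 = ∫ z, ‖symbolFun g z‖ ^ 2 ∂haarT := by
  have h := toeplitzForm_eq_integral (fun n => if n = 0 then 1 else 0) haarT (fun n => by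
    rw [integral_zpow_haarT]; simp) g
  have h2 : toeplitzForm (fun n => if n = 0 then 1 else 0) g = ((l2norm g ^ 2 : ℝ) : ℂ) := by
    unfold toeplitzForm l2norm
    rw [Real.sq_sqrt (Finset.sum_nonneg fun _ _ => by positivity)]
    push_cast
    refine Finset.sum_congr rfl fun n hn => ?_
    rw [Finset.sum_eq_single n]
    · simp [Complex.mul_conj, Complex.normSq_eq_norm_sq]
    · intro m _ hm
      rw [if_neg (by omega)]; simp
    · intro h'; exact absurd hn h'
  rw [h2] at h
  exact_mod_cast h

lemma integral_polynomial_haarT (p : Polynomial ℂ) :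
    ∫ z : Circle, p.eval (z : ℂ) ∂haarT = p.eval 0 := by
  induction p using Polynomial.induction_on' with
  | add p q hp hq =>
    simp only [Polynomial.eval_add]
    rw [integral_add (integrable_of_cont (by fun_prop)) (integrable_of_cont (by fun_prop)), hp, hq]
  | monomial n a =>
    simp only [Polynomial.eval_monomial]
    have := integral_zpow_haarT n
    simp only [zpow_natCast] at this
    rw [integral_const_mul, this, zero_pow_eq]
    simp

/-! ### Peaking polynomials -/

/-- Real continuous functions on the circle are uniform limits of real parts of analytic
polynomials: a negative power `c z⁻ⁿ` has the same real part as `conj c zⁿ`. -/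
lemma exists_polynomial_re_approx (f : C(Circle, ℝ)) {δ : ℝ} (hδ : 0 < δ) :
    ∃ F : Polynomial ℂ, (F.eval 0).im = 0 ∧ ∀ z : Circle, |(F.eval (z : ℂ)).re - f z| < δ := by
  have : Fact ((0 : ℝ) < 1) := ⟨one_pos⟩
  have hspan : ∀ w ∈ Submodule.span ℂ (Set.range (@fourier (1 : ℝ))), ∀ c : ℂ,
      ∃ F : Polynomial ℂ, ∀ x : AddCircle (1 : ℝ),
        (F.eval (AddCircle.toCircle x : ℂ)).re = (c * w x).re := by
    intro w hw
    induction hw using Submodule.span_induction with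
    | mem w hw =>
      obtain ⟨n, rfl⟩ := hw
      intro c
      have hval : ∀ x : AddCircle (1 : ℝ), fourier n x = (AddCircle.toCircle x : ℂ) ^ n := by
        intro x
        rw [fourier_apply, AddCircle.toCircle_zsmul, Circle.coe_zpow]
      obtain ⟨k, rfl | rfl⟩ := n.eq_nat_or_neg
      · refine ⟨Polynomial.monomial k c, fun x => ?_⟩
        rw [hval, Polynomial.eval_monomial, zpow_natCast]
      · refine ⟨Polynomial.monomial k (conj c), fun x => ?_⟩
        rw [hval, Polynomial.eval_monomial, zpow_neg, zpow_natCast, ← inv_pow, ← Circle.coe_inv,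
          Circle.coe_inv_eq_conj, ← Complex.conj_re]
        simp
    | zero => exact fun c => ⟨0, by simp⟩
    | add u v _ _ hu hv =>
      intro c
      obtain ⟨F, hF⟩ := hu c
      obtain ⟨G, hG⟩ := hv c
      exact ⟨F + G, fun x => by simp [mul_add, hF, hG]⟩
    | smul a u _ hu =>
      intro c
      obtain ⟨F, hF⟩ := hu (c * a)
      exact ⟨F, fun x => by rw [hF]; simp [mul_assoc]⟩
  let φ : C(AddCircle (1 : ℝ), ℂ) :=
    ⟨fun x => (f (AddCircle.toCircle x) : ℂ), by
      have := AddCircle.continuous_toCircle (T := (1 : ℝ))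
      fun_prop⟩
  have hmem : φ ∈ closure (Submodule.span ℂ (Set.range (@fourier (1 : ℝ))) : Set _) := by
    rw [← Submodule.topologicalClosure_coe, span_fourier_closure_eq_top]
    trivial
  obtain ⟨w, hw, hdist⟩ := Metric.mem_closure_iff.1 hmem δ hδ
  obtain ⟨F, hF⟩ := hspan w hw 1
  -- Subtracting an imaginary constant normalizes `F 0` without changing the real part.
  refine ⟨F - Polynomial.C (((F.eval 0).im : ℂ) * Complex.I), by simp, fun z => ?_⟩
  obtain ⟨x, rfl⟩ : ∃ x : AddCircle (1 : ℝ), AddCircle.toCircle x = z := by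
    obtain ⟨x, hx⟩ := (AddCircle.homeomorphCircle (T := (1 : ℝ)) one_ne_zero).surjective z
    exact ⟨x, by rw [← hx, AddCircle.homeomorphCircle_apply]⟩
  have h1 : ‖φ x - w x‖ < δ := by
    rw [← dist_eq_norm]
    exact (ContinuousMap.dist_apply_le_dist x).trans_lt hdist
  have h2 : |(φ x - w x).re| < δ := (Complex.abs_re_le_norm _).trans_lt h1
  rw [abs_sub_comm]
  simpa [φ, hF] using h2

/-- `exp ∘ F` is a uniform limit of polynomials on the closed unit disc. -/
lemma exists_polynomial_exp_approx (F : Polynomial ℂ) {δ : ℝ} (hδ : 0 < δ) :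
    ∃ q : Polynomial ℂ, ∀ z : ℂ, ‖z‖ ≤ 1 → ‖q.eval z - Complex.exp (F.eval z)‖ < δ := by
  obtain ⟨R, hR⟩ := (isCompact_closedBall (0 : ℂ) 1).exists_bound_of_continuousOn
    F.continuous.continuousOn
  have hu := tendstoUniformlyOn_tsum_nat (s := Metric.closedBall (0 : ℂ) 1)
    (f := fun n z => F.eval z ^ n / (n.factorial : ℂ)) (Real.summable_pow_div_factorial R)
    (fun n z hz => by
      rw [norm_div, norm_pow, Complex.norm_natCast]
      gcongr
      exact hR z hz)
  obtain ⟨N, hN⟩ := (Metric.tendstoUniformlyOn_iff.1 hu δ hδ).exists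
  refine ⟨∑ n ∈ range N, Polynomial.C ((n.factorial : ℂ)⁻¹) * F ^ n, fun z hz => ?_⟩
  have h := hN z (by simpa using hz)
  rw [dist_comm, dist_eq_norm] at h
  have he : Complex.exp (F.eval z) = ∑' n : ℕ, F.eval z ^ n / (n.factorial : ℂ) := by
    rw [Complex.exp_eq_exp_ℂ, NormedSpace.exp_eq_tsum_div]
  have hev : (∑ n ∈ range N, Polynomial.C ((n.factorial : ℂ)⁻¹) * F ^ n).eval z =
      ∑ n ∈ range N, F.eval z ^ n / (n.factorial : ℂ) := by
    simp [Polynomial.eval_finsetSum, div_eq_mul_inv, mul_comm]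
  rw [he, hev]
  exact h

/-- On a compact Lebesgue-null set `K` there are analytic polynomials close to `1` on `K`,
uniformly bounded on the circle and small in `L²(m)`. They have the form `1 - q`, where `q`
approximates `exp (-F)` for a polynomial `F` whose real part is non-negative, large on `K`, and of
small mean; since `∫ q dm = q 0 ≈ 1` and `|q| ≲ 1`, the function `q` is close to `1` in `L²(m)`. -/
lemma exists_peaking_polynomial {K : Set Circle} (hK : IsCompact K) (hK0 : haarT K = 0)
    {ε : ℝ} (hε : 0 < ε) :
    ∃ p : Polynomial ℂ, (∀ z : Circle, ‖p.eval (z : ℂ)‖ ≤ 3) ∧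
      (∀ z ∈ K, ‖p.eval (z : ℂ) - 1‖ ≤ ε) ∧ ∫ z : Circle, ‖p.eval (z : ℂ)‖ ^ 2 ∂haarT ≤ ε := by
  obtain ⟨δ, hδ, hδ1, hδε⟩ : ∃ δ : ℝ, 0 < δ ∧ δ ≤ 1 ∧ 11 * δ ≤ ε :=
    ⟨min 1 (ε / 11), by positivity, min_le_left _ _, by
      have := min_le_right 1 (ε / 11); linarith⟩
  obtain ⟨U, hKU, hU, hmU⟩ := K.exists_isOpen_lt_of_lt (μ := haarT) (ENNReal.ofReal (δ ^ 2))
    (by rw [hK0]; exact ENNReal.ofReal_pos.2 (by positivity))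
  obtain ⟨φ, hφ0, hφ1, hφ⟩ := exists_continuous_zero_one_of_isClosed hU.isClosed_compl hK.isClosed
    (Set.disjoint_compl_left_iff_subset.2 hKU)
  have hφint : ∫ z, φ z ∂haarT ≤ δ ^ 2 := by
    calc ∫ z, φ z ∂haarT ≤ ∫ z, U.indicator (fun _ => (1 : ℝ)) z ∂haarT := by
          refine integral_mono (integrable_of_cont φ.continuous)
            ((integrable_const _).indicator hU.measurableSet) fun z => ?_
          by_cases hz : z ∈ U
          · simpa [hz] using (hφ z).2
          · simpa [hz] using (hφ0 (show z ∈ Uᶜ from hz)).le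
      _ = haarT.real U := by
          rw [integral_indicator hU.measurableSet]; simp
      _ ≤ δ ^ 2 := ENNReal.toReal_le_of_le_ofReal (by positivity) hmU.le
  let v : C(Circle, ℝ) := ⟨fun z => δ⁻¹ * φ z + δ, by fun_prop⟩
  obtain ⟨F, hF0, hF⟩ := exists_polynomial_re_approx v hδ
  have hFv : ∀ z : Circle, δ⁻¹ * φ z ≤ (F.eval (z : ℂ)).re ∧
      (F.eval (z : ℂ)).re ≤ δ⁻¹ * φ z + 2 * δ := by
    intro z
    have h := abs_lt.1 (hF z)
    have hv : v z = δ⁻¹ * φ z + δ := rfl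
    rw [hv] at h
    constructor <;> linarith [h.1, h.2]
  have hFpos : ∀ z : Circle, 0 ≤ (F.eval (z : ℂ)).re := fun z =>
    le_trans (mul_nonneg (by positivity) (hφ z).1) (hFv z).1
  have hcF : Continuous fun z : Circle => F.eval (z : ℂ) := by fun_prop
  have hFmean : (F.eval 0).re ≤ 3 * δ := by
    have h1 : (F.eval 0).re = ∫ z : Circle, (F.eval (z : ℂ)).re ∂haarT := by
      rw [← integral_polynomial_haarT F]
      exact (integral_re (integrable_of_cont hcF)).symm
    rw [h1]
    calc ∫ z : Circle, (F.eval (z : ℂ)).re ∂haarT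
        ≤ ∫ z, (δ⁻¹ * φ z + 2 * δ) ∂haarT :=
          integral_mono (integrable_of_cont (Complex.continuous_re.comp hcF))
            (integrable_of_cont (by fun_prop)) fun z => (hFv z).2
      _ = δ⁻¹ * ∫ z, φ z ∂haarT + 2 * δ := by
          rw [integral_add (integrable_of_cont (by fun_prop)) (integrable_const _),
            integral_const_mul]
          simp
      _ ≤ δ⁻¹ * δ ^ 2 + 2 * δ := by gcongr
      _ = 3 * δ := by field_simp; ring
  obtain ⟨q, hq⟩ := exists_polynomial_exp_approx (-F) hδ
  have hqz : ∀ z : Circle, ‖q.eval (z : ℂ)‖ ≤ Real.exp (-(F.eval (z : ℂ)).re) + δ := by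
    intro z
    have h := hq z z.norm_coe.le
    have h2 : ‖Complex.exp ((-F).eval (z : ℂ))‖ = Real.exp (-(F.eval (z : ℂ)).re) := by
      rw [Complex.norm_exp]; simp
    have := norm_le_norm_add_norm_sub' (q.eval (z : ℂ)) (Complex.exp ((-F).eval (z : ℂ)))
    linarith
  have hq1 : ∀ z : Circle, ‖q.eval (z : ℂ)‖ ≤ 1 + δ := fun z => by
    have : Real.exp (-(F.eval (z : ℂ)).re) ≤ 1 := Real.exp_le_one_iff.2 (by linarith [hFpos z])
    linarith [hqz z]
  have hq0 : 1 - 4 * δ ≤ (q.eval 0).re := by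
    have h := (Complex.abs_re_le_norm _).trans_lt (hq 0 (by simp))
    have h2 : (Complex.exp ((-F).eval 0)).re = Real.exp (-(F.eval 0).re) := by
      rw [Complex.exp_re]; simp [hF0]
    rw [Complex.sub_re, h2] at h
    have h3 := Real.add_one_le_exp (-(F.eval 0).re)
    linarith [(abs_lt.1 h).1]
  refine ⟨1 - q, fun z => ?_, fun z hz => ?_, ?_⟩
  · have := norm_sub_le (1 : ℂ) (q.eval (z : ℂ))
    rw [norm_one] at this
    simp only [Polynomial.eval_sub, Polynomial.eval_one]
    linarith [hq1 z]
  · have h1 : δ⁻¹ ≤ (F.eval (z : ℂ)).re := by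
      have := (hFv z).1
      rw [hφ1 hz] at this
      simpa using this
    have h2 : Real.exp (-(F.eval (z : ℂ)).re) ≤ δ := by
      rw [Real.exp_neg]
      refine inv_le_of_inv_le₀ hδ ?_
      linarith [Real.add_one_le_exp (F.eval (z : ℂ)).re]
    have : (1 - q).eval (z : ℂ) - 1 = -q.eval (z : ℂ) := by simp
    rw [this, norm_neg]
    linarith [hqz z]
  · have hcq : Continuous fun z : Circle => q.eval (z : ℂ) := by fun_prop
    have hpt : ∀ z : Circle, ‖(1 - q).eval (z : ℂ)‖ ^ 2 ≤
        (1 + (1 + δ) ^ 2) - 2 * (q.eval (z : ℂ)).re := by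
      intro z
      have h1 : ‖(1 - q).eval (z : ℂ)‖ ^ 2 =
          1 - 2 * (q.eval (z : ℂ)).re + ‖q.eval (z : ℂ)‖ ^ 2 := by
        rw [← Complex.normSq_eq_norm_sq, ← Complex.normSq_eq_norm_sq, Complex.normSq_apply,
          Complex.normSq_apply]
        simp
        ring
      have h2 : ‖q.eval (z : ℂ)‖ ^ 2 ≤ (1 + δ) ^ 2 := by
        gcongr
        exact hq1 z
      linarith
    have h3 : ∫ z : Circle, (q.eval (z : ℂ)).re ∂haarT = (q.eval 0).re := by
      rw [← integral_polynomial_haarT q]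
      exact integral_re (integrable_of_cont hcq)
    have hcr : Continuous fun z : Circle => 2 * (q.eval (z : ℂ)).re :=
      continuous_const.mul (Complex.continuous_re.comp hcq)
    calc ∫ z : Circle, ‖(1 - q).eval (z : ℂ)‖ ^ 2 ∂haarT
        ≤ ∫ z : Circle, ((1 + (1 + δ) ^ 2) - 2 * (q.eval (z : ℂ)).re) ∂haarT :=
          integral_mono (integrable_of_cont (by fun_prop))
            (integrable_of_cont (continuous_const.sub hcr)) hpt
      _ = (1 + (1 + δ) ^ 2) - 2 * (q.eval 0).re := by
          rw [integral_sub (integrable_const _) (integrable_of_cont hcr), integral_const_mul, h3]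
          simp
      _ ≤ ε := by nlinarith

/-! ### Closability in terms of `L²` convergence -/

lemma memLp_symbolFun (M : Measure Circle) [IsFiniteMeasure M] (g : ℕ →₀ ℂ) :
    MemLp (symbolFun g) 2 M :=
  (memLp_two_iff_integrable_sq_norm (continuous_symbolFun g).aestronglyMeasurable).2
    (integrable_of_cont ((continuous_symbolFun g).norm.pow 2))

lemma eLpNorm_symbolFun (M : Measure Circle) [IsFiniteMeasure M] (g : ℕ →₀ ℂ) :
    eLpNorm (symbolFun g) 2 M = ENNReal.ofReal (√(∫ z, ‖symbolFun g z‖ ^ 2 ∂M)) := by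
  rw [(memLp_symbolFun M g).eLpNorm_eq_integral_rpow_norm (by simp) (by simp), Real.sqrt_eq_rpow]
  simp

/-- Convergence to zero in `L²` passes to almost everywhere convergence along a subsequence. -/
lemma exists_subseq_tendsto_ae (M : Measure Circle) [IsFiniteMeasure M] (g : ℕ → (ℕ →₀ ℂ))
    (h : Tendsto (fun k => ∫ z, ‖symbolFun (g k) z‖ ^ 2 ∂M) atTop (nhds 0)) :
    ∃ ns : ℕ → ℕ, StrictMono ns ∧
      ∀ᵐ z ∂M, Tendsto (fun k => symbolFun (g (ns k)) z) atTop (nhds 0) := by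
  have h1 : Tendsto (fun k => eLpNorm (symbolFun (g k) - 0) 2 M) atTop (nhds 0) := by
    simp_rw [sub_zero, eLpNorm_symbolFun]
    have := ENNReal.tendsto_ofReal ((Real.continuous_sqrt.tendsto 0).comp h)
    simpa using this
  exact (tendstoInMeasure_of_tendsto_eLpNorm (by simp)
    (fun k => (continuous_symbolFun (g k)).aestronglyMeasurable)
    aestronglyMeasurable_zero h1).exists_seq_tendsto_ae

lemma formClosable_iff (t : ℤ → ℂ) (M : Measure Circle) [IsFiniteMeasure M]
    (hmom : ∀ n : ℤ, t n = ∫ z, (z : ℂ) ^ (-n) ∂M) :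
    FormClosable (toeplitzForm t) ↔ ∀ g : ℕ → (ℕ →₀ ℂ),
      Tendsto (fun k => ∫ z, ‖symbolFun (g k) z‖ ^ 2 ∂haarT) atTop (nhds 0) →
      Tendsto (fun p : ℕ × ℕ => ∫ z, ‖symbolFun (g p.1 - g p.2) z‖ ^ 2 ∂M) atTop (nhds 0) →
      Tendsto (fun k => ∫ z, ‖symbolFun (g k) z‖ ^ 2 ∂M) atTop (nhds 0) := by
  have hre : ∀ {ι : Type} (l : Filter ι) (f : ι → ℝ),
      Tendsto (fun i => ((f i : ℝ) : ℂ)) l (nhds 0) ↔ Tendsto f l (nhds 0) := by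
    intro ι l f
    rw [← Complex.ofReal_zero]
    exact Complex.isometry_ofReal.isEmbedding.isInducing.tendsto_nhds_iff.symm
  have hl2 : ∀ g : ℕ → (ℕ →₀ ℂ), Tendsto (fun k => l2norm (g k)) atTop (nhds 0) ↔
      Tendsto (fun k => ∫ z, ‖symbolFun (g k) z‖ ^ 2 ∂haarT) atTop (nhds 0) := by
    intro g
    simp_rw [← l2norm_sq_eq_integral]
    constructor
    · intro h
      simpa using h.pow 2
    · intro h
      have h2 := (Real.continuous_sqrt.tendsto 0).comp h
      have h3 : ∀ k, √(l2norm (g k) ^ 2) = l2norm (g k) := fun k =>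
        Real.sqrt_sq (Real.sqrt_nonneg _)
      simpa [Function.comp_def, h3] using h2
  unfold FormClosable
  simp_rw [toeplitzForm_eq_integral t M hmom, hre, hl2]

/-- If `M ≪ m`, the `L²(M)`-limit of a Cauchy sequence tending to zero in `L²(m)` vanishes. -/
lemma tendsto_of_absolutelyContinuous {M : Measure Circle} [IsFiniteMeasure M] (hM : M ≪ haarT)
    (g : ℕ → (ℕ →₀ ℂ))
    (h0 : Tendsto (fun k => ∫ z, ‖symbolFun (g k) z‖ ^ 2 ∂haarT) atTop (nhds 0))
    (hc : Tendsto (fun p : ℕ × ℕ => ∫ z, ‖symbolFun (g p.1 - g p.2) z‖ ^ 2 ∂M) atTop (nhds 0)) :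
    Tendsto (fun k => ∫ z, ‖symbolFun (g k) z‖ ^ 2 ∂M) atTop (nhds 0) := by
  let f : ℕ → Lp ℂ 2 M := fun k => (memLp_symbolFun M (g k)).toLp
  have hnorm : ∀ g : ℕ →₀ ℂ, ‖(memLp_symbolFun M g).toLp‖ = √(∫ z, ‖symbolFun g z‖ ^ 2 ∂M) := by
    intro g
    rw [Lp.norm_toLp, eLpNorm_symbolFun, ENNReal.toReal_ofReal (Real.sqrt_nonneg _)]
  have hsub : ∀ k l, f k - f l = (memLp_symbolFun M (g k - g l)).toLp := by
    intro k l
    rw [← MemLp.toLp_sub]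
    exact MemLp.toLp_congr _ _ (ae_of_all _ fun z => (symbolFun_sub _ _ z).symm)
  have hcauchy : CauchySeq f := by
    rw [cauchySeq_iff_tendsto_dist_atTop_0]
    simp_rw [dist_eq_norm, hsub, hnorm]
    simpa [Function.comp_def] using (Real.continuous_sqrt.tendsto 0).comp hc
  obtain ⟨F, hF⟩ := cauchySeq_tendsto_of_complete hcauchy
  obtain ⟨ns, hns, hae⟩ := exists_subseq_tendsto_ae haarT g h0
  obtain ⟨ms, hms, hae'⟩ :=
    (tendstoInMeasure_of_tendsto_Lp (hF.comp hns.tendsto_atTop)).exists_seq_tendsto_ae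
  have hF0 : F = 0 := by
    rw [Lp.eq_zero_iff_ae_eq_zero]
    have hcoe : ∀ᵐ z ∂M, ∀ k, (f k) z = symbolFun (g k) z :=
      ae_all_iff.2 fun k => (memLp_symbolFun M (g k)).coeFn_toLp
    filter_upwards [hM.ae_le hae, hae', hcoe] with z h1 h2 h3
    simp only [Function.comp_apply, h3] at h2
    exact tendsto_nhds_unique h2 (h1.comp hms.tendsto_atTop)
  have hfin : Tendsto (fun k => ‖f k‖ ^ 2) atTop (nhds 0) := by
    have := (hF.norm).pow 2
    simpa [hF0] using this
  refine hfin.congr fun k => ?_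
  rw [hnorm, Real.sq_sqrt (integral_nonneg fun z => by positivity)]

/-- The converse: peaking polynomials on compact sets exhausting a carrier `E` of the singular part
converge to the indicator of `E` in `L²(M)` and to zero in `L²(m)`. -/
lemma absolutelyContinuous_of_closable {M : Measure Circle} [IsFiniteMeasure M]
    (H : ∀ g : ℕ → (ℕ →₀ ℂ),
      Tendsto (fun k => ∫ z, ‖symbolFun (g k) z‖ ^ 2 ∂haarT) atTop (nhds 0) →
      Tendsto (fun p : ℕ × ℕ => ∫ z, ‖symbolFun (g p.1 - g p.2) z‖ ^ 2 ∂M) atTop (nhds 0) →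
      Tendsto (fun k => ∫ z, ‖symbolFun (g k) z‖ ^ 2 ∂M) atTop (nhds 0)) :
    M ≪ haarT := by
  obtain ⟨S, hS, hsS, hmS⟩ := Measure.mutuallySingular_singularPart M haarT
  -- `M` is absolutely continuous on `S`, and `Sᶜ` is Lebesgue-null.
  have hac : ∀ A, haarT A = 0 → M (A ∩ S) = 0 := by
    intro A hA
    rw [Measure.haveLebesgueDecomposition_add M haarT, Measure.add_apply,
      measure_mono_null Set.inter_subset_right hsS,
      withDensity_absolutelyContinuous haarT (M.rnDeriv haarT)
        (measure_mono_null Set.inter_subset_left hA), add_zero]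
  set E := Sᶜ with hE
  have hEm : MeasurableSet E := hS.compl
  suffices hME : M E = 0 by
    refine Measure.AbsolutelyContinuous.mk fun A _ hA => ?_
    refine measure_mono_null (t := (A ∩ S) ∪ E) (fun x hx => ?_)
      (measure_union_null (hac A hA) hME)
    by_cases hxS : x ∈ S
    · exact Or.inl ⟨hx, hxS⟩
    · exact Or.inr hxS
  have hK : ∀ n : ℕ, ∃ K ⊆ E, IsCompact K ∧ M (E \ K) < (2⁻¹ : ENNReal) ^ n := fun n =>
    hEm.exists_isCompact_sdiff_lt (measure_ne_top M E) (by simp)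
  choose K hKE hKc hKM using hK
  choose p hp3 hp1 hp0 using fun n : ℕ => exists_peaking_polynomial (hKc n)
    (measure_mono_null (hKE n) hmS) (ε := 1 / ((n : ℝ) + 1)) (by positivity)
  let g : ℕ → (ℕ →₀ ℂ) := fun n => coeffSeq (p n)
  have hg : ∀ n z, symbolFun (g n) z = (p n).eval (z : ℂ) := fun n z => symbolFun_coeffSeq _ _
  have hL2 : Tendsto (fun k => ∫ z, ‖symbolFun (g k) z‖ ^ 2 ∂haarT) atTop (nhds 0) := by
    refine squeeze_zero (fun k => integral_nonneg fun z => by positivity) (fun k => ?_)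
      (tendsto_one_div_add_atTop_nhds_zero_nat (𝕜 := ℝ))
    simp_rw [hg]
    exact hp0 k
  obtain ⟨ns, hns, hae⟩ := exists_subseq_tendsto_ae haarT g hL2
  -- On `E` the whole sequence tends to `1` almost everywhere, by Borel–Cantelli.
  have hsum : ∑' n, M (E \ K n) ≠ ⊤ := by
    refine ne_top_of_le_ne_top ?_ (ENNReal.tsum_le_tsum fun n => (hKM n).le)
    rw [ENNReal.tsum_geometric]
    simp
  have hlim : ∀ᵐ z ∂M, Tendsto (fun k => symbolFun (g (ns k)) z) atTop
      (nhds (E.indicator (fun _ => (1 : ℂ)) z)) := by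
    have hS' : ∀ᵐ z ∂M, z ∈ S → Tendsto (fun k => symbolFun (g (ns k)) z) atTop (nhds 0) := by
      rw [ae_iff] at hae ⊢
      refine measure_mono_null (fun z hz => ?_) (hac _ hae)
      simp only [Set.mem_ofPred_eq, Classical.not_imp] at hz
      exact ⟨hz.2, hz.1⟩
    filter_upwards [hS', ae_eventually_notMem hsum] with z h1 h2
    by_cases hz : z ∈ S
    · rw [Set.indicator_of_notMem (by simpa [hE] using hz)]
      exact h1 hz
    · have hzE : z ∈ E := hz
      rw [Set.indicator_of_mem hzE]
      refine Tendsto.comp (g := fun n => symbolFun (g n) z) ?_ hns.tendsto_atTop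
      rw [tendsto_iff_norm_sub_tendsto_zero]
      refine squeeze_zero' (.of_forall fun k => norm_nonneg _) ?_
        (tendsto_one_div_add_atTop_nhds_zero_nat (𝕜 := ℝ))
      filter_upwards [h2] with n hn
      rw [hg]
      exact hp1 n z (by by_contra hc; exact hn ⟨hzE, hc⟩)
  have hbd : ∀ k z, ‖symbolFun (g k) z‖ ≤ 3 := fun k z => by rw [hg]; exact hp3 k z
  have hT := H (fun k => g (ns k)) (hL2.comp hns.tendsto_atTop) (by
    have : Tendsto (fun q : ℕ × ℕ => ∫ z, ‖symbolFun (g (ns q.1) - g (ns q.2)) z‖ ^ 2 ∂M) atTop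
        (nhds (∫ _, (0 : ℝ) ∂M)) := by
      refine tendsto_integral_filter_of_dominated_convergence (fun _ => 6 ^ 2)
        (.of_forall fun q => ((continuous_symbolFun _).norm.pow 2).aestronglyMeasurable)
        (.of_forall fun q => ae_of_all _ fun z => ?_) (integrable_const _) ?_
      · rw [norm_pow, norm_norm]
        gcongr
        rw [symbolFun_sub]
        linarith [norm_sub_le (symbolFun (g (ns q.1)) z) (symbolFun (g (ns q.2)) z),
          hbd (ns q.1) z, hbd (ns q.2) z]
      · filter_upwards [hlim] with z hz
        simp_rw [symbolFun_sub]
        rw [← prod_atTop_atTop_eq]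
        have hfst : Tendsto Prod.fst ((atTop : Filter ℕ) ×ˢ (atTop : Filter ℕ)) atTop :=
          tendsto_fst
        have hsnd : Tendsto Prod.snd ((atTop : Filter ℕ) ×ˢ (atTop : Filter ℕ)) atTop :=
          tendsto_snd
        have := ((hz.comp hfst).sub (hz.comp hsnd)).norm.pow 2
        simpa [Function.comp_def] using this
    simpa using this)
  have hT' : Tendsto (fun k => ∫ z, ‖symbolFun (g (ns k)) z‖ ^ 2 ∂M) atTop
      (nhds (∫ z, E.indicator (fun _ => (1 : ℝ)) z ∂M)) := by
    refine tendsto_integral_of_dominated_convergence (fun _ => 3 ^ 2)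
      (fun q => ((continuous_symbolFun _).norm.pow 2).aestronglyMeasurable)
      (integrable_const _) (fun k => ae_of_all _ fun z => ?_) ?_
    · rw [norm_pow, norm_norm]
      gcongr
      exact hbd _ z
    · filter_upwards [hlim] with z hz
      have := hz.norm.pow 2
      convert this using 2
      by_cases h : z ∈ E <;> simp [h]
  have hzero := tendsto_nhds_unique hT' hT
  rw [integral_indicator hEm] at hzero
  simpa [Measure.real, ENNReal.toReal_eq_zero_iff] using hzero

/-- **Main theorem.** A semibounded Toeplitz quadratic form is closable in `ℓ²(ℤ₊)` if and only
if the representing measure `M` of its entries is absolutely continuous with respect to the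
normalized Lebesgue measure on `𝕋`. -/
theorem toeplitzForm_closable_iff_absolutelyContinuous
    (γ : ℝ) (hγ : 0 < γ) (t : ℤ → ℂ)
    (hsym : ∀ n : ℤ, t (-n) = conj (t n))
    (hlb : ∀ g : ℕ →₀ ℂ, ((γ * l2norm g ^ 2 : ℝ) : ℂ) ≤ toeplitzForm t g)
    (M : Measure Circle) [IsFiniteMeasure M]
    (hmom : ∀ n : ℤ, t n = ∫ z, (z : ℂ) ^ (-n) ∂M) :
    FormClosable (toeplitzForm t) ↔ M ≪ haarT := by
  rw [formClosable_iff t M hmom]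
  exact ⟨absolutelyContinuous_of_closable, fun hM g => tendsto_of_absolutelyContinuous hM g⟩
end
end

section
/- (Example of a non-closable Toeplitz form.) The quadratic form s[g,g] = |Σ_{n ≥ 0} g_n|² + Σ_{n ≥ 0} |g_n|², defined for finitely supported g : ℕ → ℂ, satisfies s[g,g] ≥ ‖g‖² but is not closable in ℓ²(ℤ₊): there exists a sequence (g^{(k)}) of finitely supported sequences with ‖g^{(k)}‖ → 0 as k → ∞ and s[g^{(k)} − g^{(l)}, g^{(k)} − g^{(l)}] → 0 as k, l → ∞, yet s[g^{(k)}, g^{(k)}] ≥ 1 for all k. -/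
/-!
The witnesses are the uniform averages `g⁽ᵏ⁾ = (1/(k+1), …, 1/(k+1), 0, …)` with `k + 1` nonzero
entries. Each has total sum `1` and squared `ℓ²` norm `1/(k+1)`, so `g⁽ᵏ⁾ → 0` in `ℓ²` while
`s[g⁽ᵏ⁾] = 1 + 1/(k+1) ≥ 1`. In a difference `g⁽ᵏ⁾ - g⁽ˡ⁾` the total sums cancel, so only the squared
`ℓ²` norm survives in `s`, and it is at most `2/(k+1) + 2/(l+1)`.
-/

open MeasureTheory Filter Finset ComplexConjugate
open scoped ComplexOrder

noncomputable section

/-- The quadratic form `s[g,g] = |Σ_{n≥0} g_n|² + Σ_{n≥0} |g_n|²` (the Toeplitz form with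
`tₙ = 1` plus `‖g‖²`). -/
def exampleForm (g : ℕ →₀ ℂ) : ℂ :=
  (‖∑ n ∈ g.support, g n‖ ^ 2 + ∑ n ∈ g.support, ‖g n‖ ^ 2 : ℝ)

/-- The sequence equal to `1/(k+1)` at the indices `0, …, k` and to `0` elsewhere. -/
def avgSeq (k : ℕ) : ℕ →₀ ℂ :=
  Finsupp.onFinset (range (k + 1)) (fun n => if n < k + 1 then ((k : ℂ) + 1)⁻¹ else 0)
    (by intro n hn; by_contra h; simp_all)

lemma avgSeq_support_subset (k : ℕ) : (avgSeq k).support ⊆ range (k + 1) :=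
  Finsupp.support_onFinset_subset

lemma avgSeq_apply_of_mem {k n : ℕ} (hn : n ∈ range (k + 1)) :
    avgSeq k n = ((k : ℂ) + 1)⁻¹ := by
  exact if_pos (mem_range.mp hn)

lemma sum_support_eq {g : ℕ →₀ ℂ} {s : Finset ℕ} (h : g.support ⊆ s) :
    ∑ n ∈ g.support, g n = ∑ n ∈ s, g n :=
  sum_subset h fun _ _ hn => Finsupp.notMem_support_iff.mp hn

lemma sum_sq_support_eq {g : ℕ →₀ ℂ} {s : Finset ℕ} (h : g.support ⊆ s) :
    ∑ n ∈ g.support, ‖g n‖ ^ 2 = ∑ n ∈ s, ‖g n‖ ^ 2 :=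
  sum_subset h fun n _ hn => by simp [Finsupp.notMem_support_iff.mp hn]

lemma avgSeq_sum (k : ℕ) : ∑ n ∈ (avgSeq k).support, avgSeq k n = 1 := by
  rw [sum_support_eq (avgSeq_support_subset k), sum_congr rfl fun n hn => avgSeq_apply_of_mem hn]
  have : (k : ℂ) + 1 ≠ 0 := Nat.cast_add_one_ne_zero k
  simp [this]

lemma avgSeq_sum_sq (k : ℕ) :
    ∑ n ∈ (avgSeq k).support, ‖avgSeq k n‖ ^ 2 = 1 / ((k : ℝ) + 1) := by
  rw [sum_sq_support_eq (avgSeq_support_subset k),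
    sum_congr rfl fun n hn => by rw [avgSeq_apply_of_mem hn]]
  have h : ‖(k : ℂ) + 1‖ = (k : ℝ) + 1 := by
    exact_mod_cast Complex.norm_natCast (k + 1)
  have : (k : ℝ) + 1 ≠ 0 := Nat.cast_add_one_ne_zero k
  simp only [norm_inv, h, sum_const, card_range, nsmul_eq_mul]
  push_cast
  field_simp

lemma sum_support_sub (f g : ℕ →₀ ℂ) :
    ∑ n ∈ (f - g).support, (f - g) n = ∑ n ∈ f.support, f n - ∑ n ∈ g.support, g n := by
  rw [sum_support_eq (Finsupp.support_sub (f := f) (g := g)),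
    sum_support_eq (subset_union_left (s₁ := f.support) (s₂ := g.support)),
    sum_support_eq (subset_union_right (s₁ := f.support) (s₂ := g.support)),
    ← sum_sub_distrib]
  rfl

lemma sum_sq_support_sub_le (f g : ℕ →₀ ℂ) :
    ∑ n ∈ (f - g).support, ‖(f - g) n‖ ^ 2 ≤
      2 * ∑ n ∈ f.support, ‖f n‖ ^ 2 + 2 * ∑ n ∈ g.support, ‖g n‖ ^ 2 := by
  rw [sum_sq_support_eq (Finsupp.support_sub (f := f) (g := g)),
    sum_sq_support_eq (subset_union_left (s₁ := f.support) (s₂ := g.support)),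
    sum_sq_support_eq (subset_union_right (s₁ := f.support) (s₂ := g.support)),
    mul_sum, mul_sum, ← sum_add_distrib]
  refine sum_le_sum fun n _ => ?_
  have h : ‖(f - g) n‖ ≤ ‖f n‖ + ‖g n‖ := norm_sub_le _ _
  nlinarith [norm_nonneg ((f - g) n), sq_nonneg (‖f n‖ - ‖g n‖)]

/-- **Example of a non-closable Toeplitz form**: `s[g,g] ≥ ‖g‖²`, yet there is a sequence
`g⁽ᵏ⁾ ∈ 𝒟` with `‖g⁽ᵏ⁾‖ → 0` and `s[g⁽ᵏ⁾ - g⁽ˡ⁾] → 0` as `k, l → ∞`, while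
`s[g⁽ᵏ⁾] ≥ 1` for all `k`. -/
theorem exampleForm_not_closable :
    (∀ g : ℕ →₀ ℂ, ((l2norm g ^ 2 : ℝ) : ℂ) ≤ exampleForm g) ∧
    ∃ g : ℕ → (ℕ →₀ ℂ),
      Tendsto (fun k => l2norm (g k)) atTop (nhds 0) ∧
      Tendsto (fun p : ℕ × ℕ => exampleForm (g p.1 - g p.2)) atTop (nhds 0) ∧
      ∀ k, (1 : ℂ) ≤ exampleForm (g k) := by
  refine ⟨fun g => ?_, avgSeq, ?_, ?_, fun k => ?_⟩
  · unfold exampleForm l2norm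
    rw [Complex.real_le_real, Real.sq_sqrt (sum_nonneg fun _ _ => sq_nonneg _)]
    exact le_add_of_nonneg_left (sq_nonneg _)
  · simp only [l2norm, avgSeq_sum_sq]
    simpa using (tendsto_one_div_add_atTop_nhds_zero_nat (𝕜 := ℝ)).sqrt
  · unfold exampleForm
    rw [← Complex.ofReal_zero]
    refine (Complex.continuous_ofReal.tendsto 0).comp ?_
    have hlim := tendsto_one_div_add_atTop_nhds_zero_nat (𝕜 := ℝ)
    have hbound : Tendsto (fun p : ℕ × ℕ => 2 * (1 / ((p.1 : ℝ) + 1)) + 2 * (1 / ((p.2 : ℝ) + 1)))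
        atTop (nhds 0) := by
      rw [← prod_atTop_atTop_eq]
      simpa using ((hlim.comp tendsto_fst).const_mul 2).add ((hlim.comp tendsto_snd).const_mul 2)
    refine squeeze_zero (fun p => by positivity) (fun p => ?_) hbound
    have h := sum_sq_support_sub_le (avgSeq p.1) (avgSeq p.2)
    rw [avgSeq_sum_sq, avgSeq_sum_sq] at h
    rw [sum_support_sub, avgSeq_sum, avgSeq_sum]
    simpa using h
  · unfold exampleForm
    rw [avgSeq_sum, avgSeq_sum_sq, ← Complex.ofReal_one, Complex.real_le_real]
    simp only [Complex.ofReal_one, norm_one, one_pow]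
    exact le_add_of_nonneg_right (by positivity)
end
end

section
/- Let t : ℤ → ℂ satisfy t_{−n} = conj(t_n) for all n ∈ ℤ and Σ_{n ∈ ℤ} |t_n|² < ∞, and suppose t[g,g] ≥ ‖g‖² for all g ∈ 𝒟. Then the Toeplitz quadratic form t[g,g] is closable in ℓ²(ℤ₊). -/
/-!
Write `B(a,b) = Σ_{n,m} t_{n-m} a_m conj (b_n)` for the sesquilinear form of `t`. Since `t` is
square-summable, each row and column of the Toeplitz matrix is in `ℓ²`, so for a fixed finitely
supported `b` the functionals `B(·,b)` and `B(b,·)` are bounded in the `ℓ²` norm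
(`norm_sesq_le`, together with `sesq_swap`). Polarization (`toeplitzForm_sub`) gives
`t[b] = t[a-b] - t[a] + B(a,b) + B(b,a) ≤ t[a-b] + 2 |B(a,b)|`, because `t[a] ≥ 0`.
Taking `b = g⁽ˡ⁾`, `a = g⁽ᵏ⁾` and letting `k → ∞` with `l` fixed, the last term vanishes, and
`0 ≤ t[g⁽ˡ⁾] ≤ ε` for all large `l`.
-/

open MeasureTheory Filter Finset ComplexConjugate
open scoped ComplexOrder

noncomputable section

/-- The sesquilinear form `Σ_{n,m ∈ S} t_{n-m} a_m conj (b_n)`, truncated to a finite index set `S`;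
it does not depend on `S` once `S` contains both supports. -/
def sesq (t : ℤ → ℂ) (S : Finset ℕ) (a b : ℕ →₀ ℂ) : ℂ :=
  ∑ n ∈ S, ∑ m ∈ S, t ((n : ℤ) - (m : ℤ)) * a m * conj (b n)

lemma toeplitzForm_eq_sesq (t : ℤ → ℂ) {S : Finset ℕ} {g : ℕ →₀ ℂ} (h : g.support ⊆ S) :
    toeplitzForm t g = sesq t S g g := by
  unfold toeplitzForm sesq
  rw [← Finset.sum_subset h]
  · refine Finset.sum_congr rfl fun n _ => Finset.sum_subset h fun m _ hm => ?_
    simp [Finsupp.notMem_support_iff.mp hm]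
  · intro n _ hn
    simp [Finsupp.notMem_support_iff.mp hn]

lemma toeplitzForm_sub (t : ℤ → ℂ) (a b : ℕ →₀ ℂ) :
    toeplitzForm t (a - b) = toeplitzForm t a + toeplitzForm t b
      - sesq t (a.support ∪ b.support) a b - sesq t (a.support ∪ b.support) b a := by
  classical
  rw [toeplitzForm_eq_sesq t (S := a.support ∪ b.support) Finset.subset_union_left,
    toeplitzForm_eq_sesq t (S := a.support ∪ b.support) Finset.subset_union_right,
    toeplitzForm_eq_sesq t (S := a.support ∪ b.support) Finsupp.support_sub]
  simp only [sesq, ← Finset.sum_add_distrib, ← Finset.sum_sub_distrib]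
  refine Finset.sum_congr rfl fun n _ => Finset.sum_congr rfl fun m _ => ?_
  simp only [Finsupp.sub_apply, map_sub]
  ring

lemma sesq_swap (t : ℤ → ℂ) (hsym : ∀ n : ℤ, t (-n) = conj (t n)) (S : Finset ℕ) (a b : ℕ →₀ ℂ) :
    sesq t S b a = conj (sesq t S a b) := by
  unfold sesq
  rw [Finset.sum_comm]
  simp only [map_sum, map_mul, Complex.conj_conj, ← hsym, neg_sub]
  refine Finset.sum_congr rfl fun n _ => Finset.sum_congr rfl fun m _ => ?_
  ring

/-- For fixed `b`, the functional `a ↦ B(a,b)` is bounded in the `ℓ²` norm: Cauchy–Schwarz along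
each row of the Toeplitz matrix. -/
lemma norm_sesq_le (t : ℤ → ℂ) (hl2 : Summable fun n : ℤ => ‖t n‖ ^ 2) {S : Finset ℕ}
    {a b : ℕ →₀ ℂ} (ha : a.support ⊆ S) (hb : b.support ⊆ S) :
    ‖sesq t S a b‖ ≤ (∑ n ∈ b.support, ‖b n‖) * √(∑' n : ℤ, ‖t n‖ ^ 2) * l2norm a := by
  have hnorm : l2norm a = √(∑ m ∈ S, ‖a m‖ ^ 2) := by
    unfold l2norm
    congr 1
    refine Finset.sum_subset ha fun m _ hm => ?_
    simp [Finsupp.notMem_support_iff.mp hm]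
  have hrow (n : ℕ) : ∑ m ∈ S, ‖t ((n : ℤ) - (m : ℤ))‖ * ‖a m‖
      ≤ √(∑' n : ℤ, ‖t n‖ ^ 2) * l2norm a := by
    rw [hnorm]
    refine (Real.sum_mul_le_sqrt_mul_sqrt S _ _).trans ?_
    gcongr
    have hinj : Set.InjOn (fun m : ℕ => (n : ℤ) - (m : ℤ)) S := by
      intro x _ y _ hxy
      simp only at hxy
      omega
    rw [← Finset.sum_image (f := fun k : ℤ => ‖t k‖ ^ 2) hinj]
    exact hl2.sum_le_tsum _ fun _ _ => by positivity
  have hsum : ∑ n ∈ b.support, ‖b n‖ = ∑ n ∈ S, ‖b n‖ := by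
    refine Finset.sum_subset hb fun m _ hm => ?_
    simp [Finsupp.notMem_support_iff.mp hm]
  rw [hsum, mul_assoc, Finset.sum_mul]
  refine norm_sum_le_of_le _ fun n _ => ?_
  rw [← Finset.sum_mul, norm_mul, RCLike.norm_conj, mul_comm]
  gcongr
  refine le_trans (norm_sum_le_of_le _ fun m _ => ?_) (hrow n)
  rw [norm_mul]

/-- If the entries `tₙ` form a square-summable sequence, then the (semibounded) Toeplitz
quadratic form is closable in `ℓ²(ℤ₊)`. -/
theorem toeplitzForm_closable_of_l2
    (t : ℤ → ℂ) (hsym : ∀ n : ℤ, t (-n) = conj (t n))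
    (hl2 : Summable fun n : ℤ => ‖t n‖ ^ 2)
    (hlb : ∀ g : ℕ →₀ ℂ, ((l2norm g ^ 2 : ℝ) : ℂ) ≤ toeplitzForm t g) :
    FormClosable (toeplitzForm t) := by
  have hnn (g : ℕ →₀ ℂ) : 0 ≤ toeplitzForm t g :=
    le_trans (by exact_mod_cast sq_nonneg (l2norm g)) (hlb g)
  have hnorm (g : ℕ →₀ ℂ) : ‖toeplitzForm t g‖ = (toeplitzForm t g).re :=
    Complex.norm_of_nonneg' (hnn g) |> fun h => by
      simpa using congrArg Complex.re h
  -- Polarization, with the nonnegative term `t[a]` dropped.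
  have key (a b : ℕ →₀ ℂ) : ‖toeplitzForm t b‖ ≤ ‖toeplitzForm t (a - b)‖
      + 2 * ((∑ n ∈ b.support, ‖b n‖) * √(∑' n : ℤ, ‖t n‖ ^ 2) * l2norm a) := by
    have h := congrArg Complex.re (toeplitzForm_sub t a b)
    rw [sesq_swap t hsym _ a b] at h
    simp only [Complex.sub_re, Complex.add_re, Complex.conj_re] at h
    have h1 := norm_sesq_le t hl2 (S := a.support ∪ b.support) (a := a) (b := b)
      Finset.subset_union_left Finset.subset_union_right
    have h2 := Complex.re_le_norm (sesq t (a.support ∪ b.support) a b)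
    have h3 : 0 ≤ (toeplitzForm t a).re := by rw [← hnorm]; exact norm_nonneg _
    rw [hnorm, hnorm]
    linarith
  intro g hg hQ
  rw [Metric.tendsto_atTop] at hQ ⊢
  intro ε hε
  obtain ⟨⟨N₁, N₂⟩, hN⟩ := hQ (ε / 2) (half_pos hε)
  refine ⟨N₂, fun l hl => ?_⟩
  have hlim : Tendsto (fun k => ε / 2 + 2 * ((∑ n ∈ (g l).support, ‖g l n‖)
      * √(∑' n : ℤ, ‖t n‖ ^ 2) * l2norm (g k))) atTop (nhds (ε / 2)) := by
    simpa using ((hg.const_mul ((∑ n ∈ (g l).support, ‖g l n‖)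
      * √(∑' n : ℤ, ‖t n‖ ^ 2))).const_mul 2).const_add (ε / 2)
  have hle : ‖toeplitzForm t (g l)‖ ≤ ε / 2 := by
    refine ge_of_tendsto hlim ?_
    filter_upwards [eventually_ge_atTop N₁] with k hk
    have h := hN (k, l) ⟨hk, hl⟩
    rw [dist_zero_right] at h
    exact (key (g k) (g l)).trans (by gcongr)
  rw [dist_zero_right]
  linarith
end
end

section
/- Let M be a finite non-negative Borel measure on the unit circle 𝕋 and let S be a subset of L²(𝕋, M) that is dense in L²(𝕋, M). Suppose that for every u ∈ S the complex measure X ↦ ∫_X u(z) dM(z) is absolutely continuous with respect to the normalized Lebesgue measure m on 𝕋. Then M is absolutely continuous with respect to m. -/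
/-!
For an `m`-null Borel set `X`, the functional `u ↦ ∫_X u dM` is the inner product with the
indicator function of `X`, which lies in `L²(𝕋, M)` because `M` is finite. It is therefore
continuous, and since it vanishes on the dense set `S` it vanishes identically. Evaluating it at
the indicator itself shows that the indicator is zero in `L²(𝕋, M)`, that is, `M(X) = 0`.
-/

open MeasureTheory Filter Finset ComplexConjugate
open scoped ComplexOrder

noncomputable section

/-- If a dense set `S` of `L²(𝕋, M)` is such that for every `u ∈ S` the complex measure
`X ↦ ∫_X u dM` is absolutely continuous with respect to `m` (i.e. vanishes on `m`-null Borel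
sets), then `M` itself is absolutely continuous with respect to `m`. -/
theorem absolutelyContinuous_of_dense
    (M : Measure Circle) [IsFiniteMeasure M]
    (S : Set (Lp ℂ 2 M)) (hS : Dense S)
    (h : ∀ u ∈ S, ∀ X : Set Circle, MeasurableSet X → haarT X = 0 →
      ∫ z in X, u z ∂M = 0) :
    M ≪ haarT := by
  refine Measure.AbsolutelyContinuous.mk fun X hX hX0 => ?_
  set χ : Lp ℂ 2 M := indicatorConstLp 2 hX (measure_ne_top M X) (1 : ℂ) with hχ
  have hzero : (fun u : Lp ℂ 2 M => inner ℂ χ u) = fun _ => 0 := by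
    refine Continuous.ext_on hS (by fun_prop) continuous_const fun u hu => ?_
    simpa only [hχ, L2.inner_indicatorConstLp_one] using h u hu X hX hX0
  have hχ0 : χ = 0 := inner_self_eq_zero.mp (congrFun hzero χ)
  -- `‖χ‖ = M(X)^{1/2}`, so a vanishing indicator forces `M(X) = 0`.
  have hnorm : ‖χ‖ = 0 := by rw [hχ0, norm_zero]
  rw [hχ, norm_indicatorConstLp (by norm_num) (by norm_num), norm_one, one_mul] at hnorm
  have hreal : M.real X = 0 :=
    ((Real.rpow_eq_zero_iff_of_nonneg measureReal_nonneg).mp hnorm).1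
  exact (measureReal_eq_zero_iff (measure_ne_top M X)).mp hreal
end
end

section
/- Let γ > 0 and let t : ℤ → ℂ satisfy t_{−n} = conj(t_n) for all n ∈ ℤ and t[g,g] ≥ γ‖g‖² for all g ∈ 𝒟. If the Toeplitz quadratic form t[g,g] is closable in ℓ²(ℤ₊), then t_n → 0 as |n| → ∞. -/
/-!
The form is an inner product on finitely supported sequences, and
`t (-m) = ⟨e_m, e_0⟩`, so the claim is that `e_m` tends weakly to zero for this inner product.

Suppose it does not. Then for every `N` the affine set `C_N` of sequences `g` supported in `[N, ∞)`
with `⟨g, e_0⟩ = 1` contains a multiple of some basis vector, of form value bounded independently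
of `N`. Let `d_N` be the infimum of the form on `C_N`: it is nondecreasing and bounded, hence
convergent. By the parallelogram identity, almost minimizing elements `g_N ∈ C_N` form a Cauchy
sequence for the form, and therefore in `ℓ²` because of the lower bound `γ`. As `g_N` is supported
in `[N, ∞)`, the vectors `g_K` and `g_L` are disjointly supported for `L` large, so that
`‖g_K‖ ≤ ‖g_K - g_L‖` and `‖g_K‖ → 0`. Closability now gives `t[g_N, g_N] → 0`, which contradicts
`1 = |⟨g_N, e_0⟩|² ≤ t[g_N, g_N] t_0`.
-/

open MeasureTheory Filter Finset ComplexConjugate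
open scoped ComplexOrder

noncomputable section

/-- The sesquilinear form `t[f,g] = Σ t_{n-m} f_m conj (g_n)` that polarizes `toeplitzForm`. -/
def toeplitzBil (t : ℤ → ℂ) (f g : ℕ →₀ ℂ) : ℂ :=
  f.sum fun m a => g.sum fun n b => t ((n : ℤ) - (m : ℤ)) * a * conj b

lemma toeplitzForm_eq_bil (t : ℤ → ℂ) (g : ℕ →₀ ℂ) : toeplitzForm t g = toeplitzBil t g g := by
  unfold toeplitzForm toeplitzBil Finsupp.sum
  exact Finset.sum_comm

lemma toeplitzBil_add_left (t : ℤ → ℂ) (f f' g : ℕ →₀ ℂ) :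
    toeplitzBil t (f + f') g = toeplitzBil t f g + toeplitzBil t f' g := by
  unfold toeplitzBil
  apply Finsupp.sum_add_index'
  · intro m; simp
  · intro m a b
    rw [← Finsupp.sum_add]
    refine Finset.sum_congr rfl fun n _ => ?_
    ring

lemma toeplitzBil_add_right (t : ℤ → ℂ) (f g g' : ℕ →₀ ℂ) :
    toeplitzBil t f (g + g') = toeplitzBil t f g + toeplitzBil t f g' := by
  unfold toeplitzBil
  rw [← Finsupp.sum_add]
  refine Finset.sum_congr rfl fun n _ => ?_
  apply Finsupp.sum_add_index'
  · intro m; simp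
  · intro m a b
    rw [map_add]; ring

lemma toeplitzBil_smul_left (t : ℤ → ℂ) (c : ℂ) (f g : ℕ →₀ ℂ) :
    toeplitzBil t (c • f) g = c * toeplitzBil t f g := by
  unfold toeplitzBil
  rw [Finsupp.sum_smul_index (by intro m; simp), Finsupp.mul_sum]
  refine Finset.sum_congr rfl fun n _ => ?_
  dsimp only
  rw [Finsupp.mul_sum]
  refine Finset.sum_congr rfl fun m _ => ?_
  ring

lemma toeplitzBil_conj {t : ℤ → ℂ} (hsym : ∀ n : ℤ, t (-n) = conj (t n)) (f g : ℕ →₀ ℂ) :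
    conj (toeplitzBil t f g) = toeplitzBil t g f := by
  unfold toeplitzBil Finsupp.sum
  rw [Finset.sum_comm, map_sum]
  refine Finset.sum_congr rfl fun n _ => ?_
  rw [map_sum]
  refine Finset.sum_congr rfl fun m _ => ?_
  rw [map_mul, map_mul, ← hsym, Complex.conj_conj, neg_sub]
  ring

lemma toeplitzBil_smul_right {t : ℤ → ℂ} (hsym : ∀ n : ℤ, t (-n) = conj (t n)) (c : ℂ)
    (f g : ℕ →₀ ℂ) : toeplitzBil t f (c • g) = conj c * toeplitzBil t f g := by
  rw [← toeplitzBil_conj hsym, toeplitzBil_smul_left, map_mul, toeplitzBil_conj hsym]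

lemma toeplitzBil_single (t : ℤ → ℂ) (m n : ℕ) (a b : ℂ) :
    toeplitzBil t (Finsupp.single m a) (Finsupp.single n b)
      = t ((n : ℤ) - (m : ℤ)) * a * conj b := by
  unfold toeplitzBil
  rw [Finsupp.sum_single_index (by simp), Finsupp.sum_single_index (by simp)]

lemma toeplitzForm_parallelogram {t : ℤ → ℂ} (hsym : ∀ n : ℤ, t (-n) = conj (t n))
    (f g : ℕ →₀ ℂ) :
    toeplitzForm t (f - g) = 2 * toeplitzForm t f + 2 * toeplitzForm t g
      - 4 * toeplitzForm t ((1 / 2 : ℂ) • (f + g)) := by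
  have h : f - g = f + (-1 : ℂ) • g := by simp [sub_eq_add_neg]
  rw [h]
  simp only [toeplitzForm_eq_bil, toeplitzBil_add_left, toeplitzBil_add_right,
    toeplitzBil_smul_left, toeplitzBil_smul_right hsym]
  simp only [map_neg, map_one, map_div₀, Complex.conj_ofNat]
  ring

/-- The Cauchy–Schwarz lower bound, in the only instance that is needed. -/
lemma one_le_form_mul {t : ℤ → ℂ} (hsym : ∀ n : ℤ, t (-n) = conj (t n))
    (hnonneg : ∀ g : ℕ →₀ ℂ, 0 ≤ (toeplitzForm t g).re) (ht0 : 0 < (t 0).re)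
    {g : ℕ →₀ ℂ} (hg : toeplitzBil t g (Finsupp.single 0 1) = 1) :
    1 ≤ (toeplitzForm t g).re * (t 0).re := by
  have hg' : toeplitzBil t (Finsupp.single 0 1) g = 1 := by
    rw [← toeplitzBil_conj hsym, hg, map_one]
  -- `g - (1 / t_0) e_0` is the component of `g` orthogonal to `e_0`
  have h := hnonneg (g + ((-(1 / (t 0).re) : ℝ) : ℂ) • Finsupp.single 0 1)
  simp only [toeplitzForm_eq_bil, toeplitzBil_add_left, toeplitzBil_add_right,
    toeplitzBil_smul_left, toeplitzBil_smul_right hsym, hg, hg', toeplitzBil_single,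
    Complex.conj_ofReal, Complex.add_re, Complex.re_ofReal_mul] at h
  simp only [Nat.cast_zero, sub_zero, mul_one, map_one, Complex.one_re] at h
  rw [toeplitzForm_eq_bil]
  have h2 : (0 : ℝ) ≤ (toeplitzBil t g g).re - 1 / (t 0).re := by
    have h3 : -(1 / (t 0).re) * (-(1 / (t 0).re) * (t 0).re) = 1 / (t 0).re := by
      field_simp
    linarith
  rw [← div_le_iff₀ ht0]
  linarith

/-- The affine set `C_N` of vectors supported in `[N, ∞)` whose product with `e_0` is
`1`. -/
def tailSet (t : ℤ → ℂ) (N : ℕ) : Set (ℕ →₀ ℂ) :=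
  {g | (∀ n < N, g n = 0) ∧ toeplitzBil t g (Finsupp.single 0 1) = 1}

lemma tailSet_anti (t : ℤ → ℂ) {M N : ℕ} (h : M ≤ N) : tailSet t N ⊆ tailSet t M :=
  fun _ hg => ⟨fun n hn => hg.1 n (hn.trans_le h), hg.2⟩

lemma tailSet_midpoint (t : ℤ → ℂ) {N : ℕ} {f g : ℕ →₀ ℂ} (hf : f ∈ tailSet t N)
    (hg : g ∈ tailSet t N) : (1 / 2 : ℂ) • (f + g) ∈ tailSet t N := by
  refine ⟨fun n hn => by simp [hf.1 n hn, hg.1 n hn], ?_⟩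
  rw [toeplitzBil_smul_left, toeplitzBil_add_left, hf.2, hg.2]
  norm_num

/-- Subtracting a vector of disjoint support does not decrease the norm. -/
lemma l2norm_sq_le_sub {f g : ℕ →₀ ℂ} (h : ∀ n ∈ f.support, g n = 0) :
    l2norm f ^ 2 ≤ l2norm (f - g) ^ 2 := by
  unfold l2norm
  rw [Real.sq_sqrt (by positivity), Real.sq_sqrt (by positivity)]
  have hsub : f.support ⊆ (f - g).support := by
    intro n hn
    have := h n hn
    simp_all
  calc ∑ n ∈ f.support, ‖f n‖ ^ 2 = ∑ n ∈ f.support, ‖(f - g) n‖ ^ 2 :=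
        Finset.sum_congr rfl fun n hn => by simp [h n hn]
    _ ≤ _ := Finset.sum_le_sum_of_subset_of_nonneg hsub fun _ _ _ => by positivity

/-- A sequence drifting to infinity that is Cauchy for the form tends to zero in `ℓ²`. -/
lemma tendsto_l2norm_of_cauchy {γ : ℝ} (hγ : 0 < γ) {t : ℤ → ℂ}
    (hlb : ∀ g : ℕ →₀ ℂ, γ * l2norm g ^ 2 ≤ (toeplitzForm t g).re)
    {g : ℕ → (ℕ →₀ ℂ)} (hg : ∀ N, ∀ n < N, g N n = 0)
    (hc : Tendsto (fun p : ℕ × ℕ => (toeplitzForm t (g p.1 - g p.2)).re) atTop (nhds 0)) :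
    Tendsto (fun k => l2norm (g k)) atTop (nhds 0) := by
  rw [Metric.tendsto_atTop]
  intro ε hε
  have hev := hc.eventually (gt_mem_nhds (show (0 : ℝ) < γ * ε ^ 2 by positivity))
  obtain ⟨⟨a, b⟩, hab⟩ := eventually_atTop.1 hev
  refine ⟨a, fun K hK => ?_⟩
  have hn : 0 ≤ l2norm (g K) := Real.sqrt_nonneg _
  rw [Real.dist_eq, sub_zero, abs_of_nonneg hn]
  set L := max b ((g K).support.sup id + 1) with hL
  have h1 : (toeplitzForm t (g K - g L)).re < γ * ε ^ 2 :=
    hab (K, L) ⟨hK, le_max_left _ _⟩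
  have h2 : l2norm (g K) ^ 2 ≤ l2norm (g K - g L) ^ 2 := by
    refine l2norm_sq_le_sub fun n hn => hg L n ?_
    have h3 : n ≤ (g K).support.sup id := Finset.le_sup (f := id) hn
    exact lt_of_lt_of_le (Nat.lt_succ_of_le h3) (le_max_right _ _)
  have h3 := hlb (g K - g L)
  have h4 : l2norm (g K) ^ 2 < ε ^ 2 := by
    have : γ * l2norm (g K - g L) ^ 2 < γ * ε ^ 2 := h3.trans_lt h1
    exact h2.trans_lt (lt_of_mul_lt_mul_left this hγ.le)
  exact lt_of_pow_lt_pow_left₀ 2 hε.le h4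

/-- If every `C_N` contains a vector of form value at most `R`, then almost minimizing elements
of the `C_N` form a Cauchy sequence for the form. -/
lemma exists_cauchy_tail {t : ℤ → ℂ} (hsym : ∀ n : ℤ, t (-n) = conj (t n))
    (hnonneg : ∀ g : ℕ →₀ ℂ, 0 ≤ (toeplitzForm t g).re) {R : ℝ}
    (hR : ∀ N, ∃ g ∈ tailSet t N, (toeplitzForm t g).re ≤ R) :
    ∃ g : ℕ → (ℕ →₀ ℂ), (∀ N, g N ∈ tailSet t N) ∧
      Tendsto (fun p : ℕ × ℕ => (toeplitzForm t (g p.1 - g p.2)).re) atTop (nhds 0) := by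
  set q : (ℕ →₀ ℂ) → ℝ := fun g => (toeplitzForm t g).re with hq
  set d : ℕ → ℝ := fun N => sInf (q '' tailSet t N) with hd
  have hbdd : ∀ N, BddBelow (q '' tailSet t N) := fun N =>
    ⟨0, by rintro _ ⟨g, _, rfl⟩; exact hnonneg g⟩
  have hne : ∀ N, (q '' tailSet t N).Nonempty := fun N => by
    obtain ⟨g, hg, _⟩ := hR N
    exact ⟨_, g, hg, rfl⟩
  have hle : ∀ N, ∀ g ∈ tailSet t N, d N ≤ q g := fun N g hg =>
    csInf_le (hbdd N) ⟨g, hg, rfl⟩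
  have hmono : Monotone d := fun M N h =>
    csInf_le_csInf (hbdd M) (hne N) (Set.image_mono (tailSet_anti t h))
  have hdR : BddAbove (Set.range d) := by
    refine ⟨R, ?_⟩
    rintro _ ⟨N, rfl⟩
    obtain ⟨g, hg, h⟩ := hR N
    exact (hle N g hg).trans h
  have hlim := tendsto_atTop_ciSup hmono hdR
  have hex : ∀ N : ℕ, ∃ g ∈ tailSet t N, q g < d N + 1 / ((N : ℝ) + 1) := fun N => by
    have hpos : (0 : ℝ) < 1 / ((N : ℝ) + 1) := by positivity
    obtain ⟨_, ⟨g, hg, rfl⟩, h⟩ :=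
      exists_lt_of_csInf_lt (hne N) (lt_add_of_pos_right (d N) hpos)
    exact ⟨g, hg, h⟩
  choose g hg hgd using hex
  refine ⟨g, hg, ?_⟩
  have hfst : Tendsto (Prod.fst : ℕ × ℕ → ℕ) atTop atTop := by
    rw [← prod_atTop_atTop_eq]; exact tendsto_fst
  have hsnd : Tendsto (Prod.snd : ℕ × ℕ → ℕ) atTop atTop := by
    rw [← prod_atTop_atTop_eq]; exact tendsto_snd
  have hmin : Tendsto (fun p : ℕ × ℕ => min p.1 p.2) atTop atTop := by
    rw [tendsto_atTop]
    intro b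
    filter_upwards [hfst.eventually_ge_atTop b, hsnd.eventually_ge_atTop b] with p h1 h2
    exact le_min h1 h2
  have hupper : Tendsto (fun N : ℕ => d N + 1 / ((N : ℝ) + 1)) atTop (nhds (⨆ i, d i)) := by
    simpa using hlim.add tendsto_one_div_add_atTop_nhds_zero_nat
  have hu := (((hupper.comp hfst).const_mul 2).add ((hupper.comp hsnd).const_mul 2)).sub
    ((hlim.comp hmin).const_mul 4)
  have hz : 2 * (⨆ i, d i) + 2 * (⨆ i, d i) - 4 * (⨆ i, d i) = 0 := by ring
  rw [hz] at hu
  refine squeeze_zero (fun p => hnonneg _) (fun p => ?_) hu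
  have hmid := hle (min p.1 p.2) _ (tailSet_midpoint t
    (tailSet_anti t (min_le_left p.1 p.2) (hg p.1))
    (tailSet_anti t (min_le_right p.1 p.2) (hg p.2)))
  have hpar := congrArg Complex.re (toeplitzForm_parallelogram hsym (g p.1) (g p.2))
  simp only [Complex.sub_re, Complex.add_re, Complex.mul_re, Complex.re_ofNat, Complex.im_ofNat,
    zero_mul, sub_zero] at hpar
  have h1 := hgd p.1
  have h2 := hgd p.2
  simp only [hq] at hmid h1 h2
  simp only [Function.comp_apply]
  rw [hpar]
  linarith

/-- If a semibounded Toeplitz quadratic form is closable in `ℓ²(ℤ₊)`, then its entries satisfy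
`tₙ → 0` as `|n| → ∞`. -/
theorem tendsto_zero_of_closable (γ : ℝ) (hγ : 0 < γ) (t : ℤ → ℂ)
    (hsym : ∀ n : ℤ, t (-n) = conj (t n))
    (hlb : ∀ g : ℕ →₀ ℂ, ((γ * l2norm g ^ 2 : ℝ) : ℂ) ≤ toeplitzForm t g)
    (hcl : FormClosable (toeplitzForm t)) :
    Tendsto t cofinite (nhds 0) := by
  have hre : ∀ g, γ * l2norm g ^ 2 ≤ (toeplitzForm t g).re := fun g => by
    have h := (Complex.le_def.1 (hlb g)).1
    rwa [Complex.ofReal_re] at h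
  have him : ∀ g, toeplitzForm t g = ((toeplitzForm t g).re : ℂ) := fun g => by
    have h := (Complex.le_def.1 (hlb g)).2
    rw [Complex.ofReal_im] at h
    exact Complex.ext (by simp) (by simp [← h])
  have hnonneg : ∀ g, 0 ≤ (toeplitzForm t g).re := fun g =>
    le_trans (by positivity) (hre g)
  have ht0 : 0 < (t 0).re := by
    have h := hre (Finsupp.single 0 1)
    have h1 : l2norm (Finsupp.single 0 1) = 1 := by
      simp [l2norm]
    rw [toeplitzForm_eq_bil, toeplitzBil_single, h1] at h
    simp at h
    linarith
  by_contra hnot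
  obtain ⟨ε, hε, hinf⟩ : ∃ ε > 0, {n : ℤ | ε ≤ ‖t n‖}.Infinite := by
    by_contra! hfin
    refine hnot (Metric.tendsto_nhds.2 fun ε hε => ?_)
    have := hfin ε hε
    rw [eventually_cofinite]
    simpa using this
  have hbig : ∀ N : ℕ, ∃ n : ℕ, N ≤ n ∧ ε ≤ ‖t (-(n : ℤ))‖ := fun N => by
    by_contra! hN
    refine hinf ((Set.finite_Icc (-(N : ℤ)) N).subset fun n hn => ?_)
    by_contra hout
    have hlarge : N ≤ n.natAbs := by
      simp only [Set.mem_Icc] at hout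
      omega
    have hlt := hN n.natAbs hlarge
    have heq : ‖t (-(n.natAbs : ℤ))‖ = ‖t n‖ := by
      rcases Int.natAbs_eq n with h | h
      · rw [hsym, RCLike.norm_conj, ← h]
      · rw [← h]
    rw [heq] at hlt
    exact absurd hn (not_le.2 hlt)
  have hR : ∀ N, ∃ g ∈ tailSet t N, (toeplitzForm t g).re ≤ (t 0).re * (ε⁻¹) ^ 2 := fun N => by
    obtain ⟨n, hn, hnε⟩ := hbig N
    have hne : t (-(n : ℤ)) ≠ 0 := norm_pos_iff.1 (hε.trans_le hnε)
    refine ⟨Finsupp.single n (t (-(n : ℤ)))⁻¹, ⟨fun k hk => ?_, ?_⟩, ?_⟩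
    · exact Finsupp.single_eq_of_ne (by omega)
    · rw [toeplitzBil_single]
      simp [hne]
    · rw [toeplitzForm_eq_bil, toeplitzBil_single, mul_assoc, Complex.mul_conj,
        Complex.normSq_eq_norm_sq, sub_self, Complex.re_mul_ofReal, norm_inv]
      gcongr
  obtain ⟨g, hg, hc⟩ := exists_cauchy_tail hsym hnonneg hR
  have hl2 := tendsto_l2norm_of_cauchy hγ hre (fun N => (hg N).1) hc
  have hcC : Tendsto (fun p : ℕ × ℕ => toeplitzForm t (g p.1 - g p.2)) atTop (nhds 0) := by
    have h := (Complex.continuous_ofReal.tendsto 0).comp hc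
    rw [Complex.ofReal_zero] at h
    exact h.congr fun p => (him _).symm
  have hQ := (Complex.continuous_re.tendsto 0).comp (hcl g hl2 hcC)
  have hQ' := hQ.mul_const (t 0).re
  rw [Complex.zero_re, zero_mul] at hQ'
  have := ge_of_tendsto' hQ' fun N => one_le_form_mul hsym hnonneg ht0 (hg N).2
  norm_num at this
end
end

section
/- (Hamburger's theorem on the power moment problem.) Let q : ℕ → ℂ. One has Σ_{n,m ≥ 0} q_{n+m} g_m conj(g_n) ≥ 0 for every finitely supported sequence g : ℕ → ℂ if and only if there exists a non-negative Borel measure M on ℝ such that for every n ∈ ℕ the function x ↦ x^n is integrable with respect to M and q_n = ∫_ℝ x^n dM(x). -/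
/-!
If `qₙ = ∫ xⁿ dM`, the Hankel form at `g` is `∫ |∑ gₙ xⁿ|² dM ≥ 0`.

Conversely, a non-negative form makes every `qₙ` real (`im_eq_zero`), so `Xⁿ ↦ qₙ` is a linear
functional `L` on `ℝ[X]`, and `L (r²) ≥ 0` because it is the Hankel form at the coefficients of `r`
(`momentFunctional_sq`). A polynomial that is non-negative on `ℝ` is a sum of two squares
(`exists_sum_sq_of_nonneg`), so `L` is non-negative on such polynomials.

The M. Riesz extension theorem then gives a positive functional `Λ` on `C_c(ℝ, ℝ)` compatible with
`L`: if `f ≤ p` pointwise, then `Λ f ≤ L p` (`exists_positive_extension`). Let `M` be the measure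
representing `Λ` by the Riesz–Markov–Kakutani theorem, and let `χₖ` be cutoff functions increasing
to `1`. Fatou's lemma and `χₖ x²ⁿ ≤ x²ⁿ` give `∫ x²ⁿ dM ≤ L (X²ⁿ) < ∞`, so all moments exist. From
`|xⁿ - χₖ xⁿ| ≤ x²ⁿ⁺² / k` one gets `Λ (χₖ xⁿ) → L (Xⁿ)`, while `Λ (χₖ xⁿ) → ∫ xⁿ dM` by dominated
convergence; hence `∫ xⁿ dM = qₙ` (`exists_measure_of_positive`).
-/

open MeasureTheory Filter Finset ComplexConjugate
open scoped ComplexOrder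

noncomputable section

/-- The Hankel quadratic form `q[g,g] = Σ_{n,m ≥ 0} q_{n+m} g_m conj (g_n)` on the set `𝒟` of
finitely supported sequences `g : ℕ → ℂ`. -/
def hankelForm (q : ℕ → ℂ) (g : ℕ →₀ ℂ) : ℂ :=
  ∑ n ∈ g.support, ∑ m ∈ g.support, q (n + m) * g m * conj (g n)

open Polynomial
open scoped CompactlySupported

/-! ### Non-negative real polynomials are sums of two squares -/

/-- A real root of a non-negative polynomial is a local minimum, hence a root of the derivative. -/
lemma sq_dvd_of_nonneg_of_root {p : ℝ[X]} (hp : ∀ x, 0 ≤ p.eval x) {a : ℝ}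
    (ha : p.IsRoot a) : (X - C a) ^ 2 ∣ p := by
  obtain ⟨r, rfl⟩ := dvd_iff_isRoot.mpr ha
  have hmin : IsLocalMin (fun x => ((X - C a) * r).eval x) a :=
    Filter.Eventually.of_forall fun x => by
      simpa using hp x
  have hd := hmin.deriv_eq_zero
  rw [Polynomial.deriv] at hd
  have hr : r.IsRoot a := by simpa [derivative_mul] using hd
  obtain ⟨s, rfl⟩ := dvd_iff_isRoot.mpr hr
  exact ⟨s, by ring⟩

/-- A polynomial that is non-negative on `ℝ` is a sum of two squares. By induction on the degree: a
complex root `z` yields the factor `(X - Re z) ^ 2 + (Im z) ^ 2` (for real `z` because real roots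
are at least double), the cofactor is again non-negative, and sums of two squares are closed under
multiplication. -/
lemma exists_sum_sq_of_nonneg : ∀ (d : ℕ) (p : ℝ[X]), p.natDegree ≤ d →
    (∀ x, 0 ≤ p.eval x) → ∃ a b : ℝ[X], p = a ^ 2 + b ^ 2 := by
  intro d
  induction d using Nat.strong_induction_on with
  | _ d ih =>
  intro p hd hp
  by_cases h0 : p.natDegree = 0
  · obtain ⟨c, rfl⟩ := natDegree_eq_zero.mp h0
    have hc : 0 ≤ c := by simpa using hp 0
    exact ⟨C (√c), 0, by rw [← C_pow, Real.sq_sqrt hc]; simp⟩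
  have hpne : p ≠ 0 := by rintro rfl; simp at h0
  -- Splitting off a quadratic factor `u ^ 2 + v ^ 2` that vanishes at no point but possibly `t`.
  have key : ∀ (u v : ℝ[X]) (t : ℝ), u ^ 2 + v ^ 2 ∣ p → (u ^ 2 + v ^ 2).natDegree = 2 →
      (∀ x, x ≠ t → 0 < (u ^ 2 + v ^ 2).eval x) → ∃ a b : ℝ[X], p = a ^ 2 + b ^ 2 := by
    rintro u v t ⟨s, hs⟩ hdeg hpos
    have hsne : s ≠ 0 := by rintro rfl; simp at hs; exact hpne hs
    have hune : u ^ 2 + v ^ 2 ≠ 0 := by intro h; rw [h] at hdeg; simp at hdeg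
    have hsd : p.natDegree = 2 + s.natDegree := by
      rw [hs, natDegree_mul hune hsne, hdeg]
    have hs0 : ∀ x, x ≠ t → 0 ≤ s.eval x := fun x hx => by
      have h1 := hp x
      rw [hs, eval_mul] at h1
      exact nonneg_of_mul_nonneg_right h1 (hpos x hx)
    have hs1 : ∀ x, 0 ≤ s.eval x := by
      have hcl : IsClosed {x | 0 ≤ s.eval x} := isClosed_le continuous_const s.continuous
      intro x
      have hdense : Dense ({t}ᶜ : Set ℝ) := dense_compl_singleton t
      exact hcl.closure_subset_iff.mpr (fun y hy => hs0 y hy) (hdense x)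
    obtain ⟨a, b, hab⟩ := ih s.natDegree (by omega) s le_rfl hs1
    exact ⟨u * a - v * b, u * b + v * a, by rw [hs, hab]; ring⟩
  have hdeg : 0 < (p.map (algebraMap ℝ ℂ)).degree := by
    rw [degree_map]; exact natDegree_pos_iff_degree_pos.mp (by omega)
  obtain ⟨z, hz⟩ := Complex.exists_root hdeg
  have hz' : aeval z p = 0 := by rw [aeval_def, ← eval_map]; exact hz
  by_cases him : z.im = 0
  · have hroot : p.IsRoot z.re := by
      have hzz : z = algebraMap ℝ ℂ z.re := by apply Complex.ext <;> simp [him]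
      rw [hzz, aeval_algebraMap_apply] at hz'
      simpa [IsRoot] using hz'
    refine key (X - C z.re) 0 z.re ?_ ?_ ?_
    · simpa using sq_dvd_of_nonneg_of_root hp hroot
    · simp
    · intro x hx
      have : x - z.re ≠ 0 := sub_ne_zero.mpr hx
      simp; positivity
  · have hq := quadratic_dvd_of_aeval_eq_zero_im_ne_zero p hz' him
    have he : X ^ 2 - C (2 * z.re) * X + C (‖z‖ ^ 2) = (X - C z.re) ^ 2 + (C z.im) ^ 2 := by
      rw [Complex.sq_norm, Complex.normSq_apply]
      simp only [C_add, C_mul, C_ofNat]; ring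
    rw [he] at hq
    -- The factor has no real zero, so the exceptional point `0` is arbitrary.
    refine key _ _ 0 hq ?_ ?_
    · rw [← C_pow, natDegree_add_C]; simp
    · intro x _
      simp; positivity

/-! ### The Hankel form and the moment functional -/

/-- The linear functional on real polynomials that sends `X ^ n` to `q n`. -/
def momentFunctional (q : ℕ → ℝ) : ℝ[X] →ₗ[ℝ] ℝ :=
  Polynomial.lsum fun n => q n • LinearMap.id

@[simp] lemma momentFunctional_monomial (q : ℕ → ℝ) (n : ℕ) (a : ℝ) :
    momentFunctional q (monomial n a) = q n * a := by
  simp [momentFunctional, lsum]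

/-- The value of the moment functional at `r ^ 2` is the Hankel form at the coefficients of `r`. -/
lemma momentFunctional_sq (q : ℕ → ℂ) (hq : ∀ g : ℕ →₀ ℂ, 0 ≤ hankelForm q g) (r : ℝ[X]) :
    0 ≤ momentFunctional (fun n => (q n).re) (r ^ 2) := by
  let g : ℕ →₀ ℂ := Finsupp.onFinset r.support (fun n => (r.coeff n : ℂ)) (by simp)
  have hs : g.support = r.support := by ext; simp [g]
  have h : (hankelForm q g).re = momentFunctional (fun n => (q n).re) (r ^ 2) := by
    conv_rhs => rw [sq, r.as_sum_support, Finset.sum_mul_sum]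
    simp only [hankelForm, hs, map_sum, Complex.re_sum, monomial_mul_monomial,
      momentFunctional_monomial]
    refine Finset.sum_congr rfl fun n _ => Finset.sum_congr rfl fun m _ => ?_
    simp [g]; ring
  rw [← h]
  exact (Complex.le_def.mp (hq g)).1

/-- A sequence with non-negative Hankel form is real: test the form on `e_k` for the even indices
`2 k` and on `e_k + e_{k+1}` for the odd indices `2 k + 1`. -/
lemma im_eq_zero (q : ℕ → ℂ) (hq : ∀ g : ℕ →₀ ℂ, 0 ≤ hankelForm q g) (n : ℕ) :
    (q n).im = 0 := by
  have hform : ∀ (g : ℕ →₀ ℂ) (s : Finset ℕ), g.support ⊆ s →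
      hankelForm q g = ∑ n ∈ s, ∑ m ∈ s, q (n + m) * g m * conj (g n) := by
    intro g s hs
    rw [hankelForm]
    rw [Finset.sum_subset hs (f := fun n => ∑ m ∈ g.support, q (n + m) * g m * conj (g n))
      (fun n _ hn => by simp [Finsupp.notMem_support_iff.mp hn])]
    refine Finset.sum_congr rfl fun n _ => ?_
    exact Finset.sum_subset hs fun m _ hm => by simp [Finsupp.notMem_support_iff.mp hm]
  have heven : ∀ k, (q (k + k)).im = 0 := fun k => by
    have h := (Complex.le_def.mp (hq (Finsupp.single k 1))).2
    rw [hform _ {k} Finsupp.support_single_subset] at h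
    simpa using h.symm
  obtain ⟨k, rfl | rfl⟩ := n.even_or_odd'
  · rw [two_mul]; exact heven k
  · have h := (Complex.le_def.mp (hq (Finsupp.single k 1 + Finsupp.single (k + 1) 1))).2
    rw [hform _ {k, k + 1} (Finsupp.support_add.trans (by
      apply Finset.union_subset <;> refine Finsupp.support_single_subset.trans (by simp)))] at h
    rw [Finset.sum_pair (by simp), Finset.sum_pair (by simp), Finset.sum_pair (by simp)] at h
    simp [heven, show k + 1 + k = k + (k + 1) by ring] at h
    rw [show 2 * k + 1 = k + (k + 1) by ring]
    linarith

/-- For moments of `M` the Hankel form at `g` is `∫ |∑ gₙ xⁿ|² dM(x)`. -/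
lemma hankelForm_nonneg_of_moments (q : ℕ → ℂ) (M : Measure ℝ)
    (hM : ∀ n : ℕ, Integrable (fun x : ℝ => x ^ n) M ∧ q n = ((∫ x, x ^ n ∂M : ℝ) : ℂ))
    (g : ℕ →₀ ℂ) : 0 ≤ hankelForm q g := by
  have hpow_int : ∀ n : ℕ, Integrable (fun x : ℝ => ((x ^ n : ℝ) : ℂ)) M := fun n => (hM n).1.ofReal
  have h : hankelForm q g =
      ((∫ x : ℝ, Complex.normSq (∑ n ∈ g.support, g n * (x : ℂ) ^ n) ∂M : ℝ) : ℂ) := by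
    rw [← integral_complex_ofReal]
    have hpt : ∀ x : ℝ, ((Complex.normSq (∑ n ∈ g.support, g n * (x : ℂ) ^ n) : ℝ) : ℂ) =
        ∑ n ∈ g.support, ∑ m ∈ g.support, ((x ^ (n + m) : ℝ) : ℂ) * (g m * conj (g n)) := by
      intro x
      rw [Complex.normSq_eq_conj_mul_self, map_sum, Finset.sum_mul_sum]
      refine Finset.sum_congr rfl fun n _ => Finset.sum_congr rfl fun m _ => ?_
      simp; ring
    simp_rw [hpt]
    rw [integral_finsetSum _ fun n _ => integrable_finsetSum _ fun m _ =>
      (hpow_int (n + m)).mul_const _]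
    refine Finset.sum_congr rfl fun n _ => ?_
    rw [integral_finsetSum _ fun m _ => (hpow_int (n + m)).mul_const _]
    refine Finset.sum_congr rfl fun m _ => ?_
    rw [integral_mul_const, integral_complex_ofReal, ← (hM _).2, mul_assoc]
  rw [h]
  exact_mod_cast integral_nonneg fun x => Complex.normSq_nonneg _

/-! ### Extension of a positive functional on polynomials -/

/-- A functional `L` that is non-negative on non-negative polynomials dominates a positive functional
`Λ` on `C_c(ℝ, ℝ)`, in the sense that `f ≤ p` pointwise implies `Λ f ≤ L p`. This is the M. Riesz
extension theorem on `C_c(ℝ, ℝ) × ℝ[X]`, a pair `(f, p)` standing for the function `f + p`. -/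
lemma exists_positive_extension (L : ℝ[X] →ₗ[ℝ] ℝ)
    (hL : ∀ p : ℝ[X], (∀ x, 0 ≤ p.eval x) → 0 ≤ L p) :
    ∃ Λ : C_c(ℝ, ℝ) →ₚ[ℝ] ℝ, ∀ (f : C_c(ℝ, ℝ)) (p : ℝ[X]),
      (∀ x, f x ≤ p.eval x) → Λ f ≤ L p := by
  let s : PointedCone ℝ (C_c(ℝ, ℝ) × ℝ[X]) :=
    { carrier := {u | ∀ x, 0 ≤ u.1 x + u.2.eval x}
      zero_mem' := by simp
      add_mem' := fun {u v} hu hv x => by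
        have h1 := hu x
        have h2 := hv x
        simp only [Prod.fst_add, Prod.snd_add, CompactlySupportedContinuousMap.coe_add,
          Pi.add_apply, eval_add]
        linarith
      smul_mem' := fun c u hu x => by
        have h := mul_nonneg c.2 (hu x)
        rw [mul_add] at h
        simp only [Prod.smul_fst, Prod.smul_snd, CompactlySupportedContinuousMap.smul_apply,
          eval_smul]
        exact h }
  have hs : ∀ u, u ∈ s ↔ ∀ x, 0 ≤ u.1 x + u.2.eval x := fun u => Iff.rfl
  -- `F` is `L`, defined on the pairs `(0, p)`.
  let F : (C_c(ℝ, ℝ) × ℝ[X]) →ₗ.[ℝ] ℝ :=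
    (L ∘ₗ LinearMap.snd ℝ _ _).toPMap (Submodule.prod ⊥ ⊤)
  obtain ⟨G, hG, hGpos⟩ := riesz_extension s F
    (by
      rintro ⟨⟨f, p⟩, hf, _⟩ hu
      have hf0 : f = 0 := hf
      refine hL p fun x => ?_
      have h : 0 ≤ f x + p.eval x := hu x
      simpa [hf0] using h)
    (by
      rintro ⟨f, p⟩
      obtain ⟨c, hc⟩ := f.hasCompactSupport.exists_bound_of_continuous f.continuous
      -- Adding `c - p` to `f + p`, where `|f| ≤ c`, gives `f + c ≥ 0`.
      refine ⟨⟨(0, C c - p), rfl, trivial⟩, fun x => ?_⟩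
      have h := (abs_le.mp (hc x)).1
      simp
      linarith)
  refine ⟨PositiveLinearMap.mk₀ (G ∘ₗ LinearMap.inl ℝ _ _) fun f hf => ?_, fun f p hfp => ?_⟩
  · refine hGpos _ fun x => ?_
    simpa using hf x
  · have h1 : G (0, p) = L p := hG ⟨(0, p), rfl, trivial⟩
    have h2 : 0 ≤ G ((0, p) - (f, 0)) := hGpos _ fun x => by
      have := hfp x
      simp
      linarith
    rw [map_sub, h1] at h2
    exact sub_nonneg.mp h2

/-! ### Truncated monomials -/

/-- The continuous function equal to `1` on `[-k, k]`, to `0` outside `[-(k+1), k+1]`, and affine in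
between. -/
def cutoff (k : ℕ) (x : ℝ) : ℝ := max 0 (min 1 (k + 1 - |x|))

lemma cutoff_nonneg (k : ℕ) (x : ℝ) : 0 ≤ cutoff k x := le_max_left _ _

lemma cutoff_le_one (k : ℕ) (x : ℝ) : cutoff k x ≤ 1 := max_le zero_le_one (min_le_left _ _)

lemma cutoff_eq_one {k : ℕ} {x : ℝ} (h : |x| ≤ k) : cutoff k x = 1 := by
  rw [cutoff, min_eq_left (by linarith), max_eq_right zero_le_one]

/-- The monomial `x ^ n` multiplied by the `k`-th cutoff function. -/
def cutPow (k n : ℕ) : C_c(ℝ, ℝ) where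
  toFun x := cutoff k x * x ^ n
  continuous_toFun := by unfold cutoff; fun_prop
  hasCompactSupport' := by
    refine HasCompactSupport.intro (isCompact_closedBall (0 : ℝ) (k + 1)) fun x hx => ?_
    have h : (k : ℝ) + 1 < |x| := by simpa using hx
    have : cutoff k x = 0 := by
      rw [cutoff, max_eq_left]
      exact (min_le_right _ _).trans (by linarith)
    simp [this]

@[simp] lemma cutPow_apply (k n : ℕ) (x : ℝ) : cutPow k n x = cutoff k x * x ^ n := rfl

lemma tendsto_cutPow (n : ℕ) (x : ℝ) :
    Tendsto (fun k => cutPow k n x) atTop (nhds (x ^ n)) := by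
  obtain ⟨k₀, hk₀⟩ := exists_nat_ge |x|
  refine tendsto_const_nhds.congr' ?_
  filter_upwards [eventually_ge_atTop k₀] with k hk
  have : |x| ≤ k := hk₀.trans (by exact_mod_cast hk)
  simp [cutoff_eq_one this]

/-- The truncation error lives on `|x| > k ≥ 1`, where `k |x| ^ n ≤ |x| ^ (2 n + 2)`; the bound is by
a polynomial with a small coefficient, so that it can be fed to a functional on polynomials. -/
lemma abs_pow_sub_cutPow_le {k : ℕ} (hk : 1 ≤ k) (n : ℕ) (x : ℝ) :
    |x ^ n - cutPow k n x| ≤ (k : ℝ)⁻¹ * x ^ (2 * n + 2) := by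
  have hk' : (1 : ℝ) ≤ k := by exact_mod_cast hk
  have heven : x ^ (2 * n + 2) = |x| ^ (2 * n + 2) := by
    rw [show 2 * n + 2 = 2 * (n + 1) by ring, pow_mul, pow_mul, sq_abs]
  rw [heven]
  rcases le_or_gt |x| k with h | h
  · rw [cutPow_apply, cutoff_eq_one h]
    simp; positivity
  · have h1 : |x ^ n - cutPow k n x| ≤ |x| ^ n := by
      rw [cutPow_apply, show x ^ n - cutoff k x * x ^ n = (1 - cutoff k x) * x ^ n by ring,
        abs_mul, abs_pow, abs_of_nonneg (sub_nonneg.mpr (cutoff_le_one k x))]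
      exact mul_le_of_le_one_left (by positivity) (by linarith [cutoff_nonneg k x])
    have h2 : |x| ^ n ≤ |x| ^ (2 * n + 1) := pow_le_pow_right₀ (by linarith) (by omega)
    have h3 : k * |x| ^ n ≤ |x| ^ (2 * n + 2) := by
      rw [pow_succ' |x| (2 * n + 1)]
      exact mul_le_mul h.le h2 (by positivity) (by positivity)
    rw [inv_mul_eq_div, le_div_iff₀ (by positivity), mul_comm]
    exact (mul_le_mul_of_nonneg_left h1 (by positivity)).trans h3

/-! ### The representing measure -/

/-- A functional that is non-negative on non-negative polynomials is integration against a measure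
(Haviland's theorem on the line). -/
lemma exists_measure_of_positive (L : ℝ[X] →ₗ[ℝ] ℝ)
    (hL : ∀ p : ℝ[X], (∀ x, 0 ≤ p.eval x) → 0 ≤ L p) :
    ∃ M : Measure ℝ, ∀ n : ℕ, Integrable (fun x : ℝ => x ^ n) M ∧ ∫ x, x ^ n ∂M = L (X ^ n) := by
  obtain ⟨Λ, hΛ⟩ := exists_positive_extension L hL
  let M := RealRMK.rieszMeasure Λ
  have hM : ∀ k n, ∫ x, cutPow k n x ∂M = Λ (cutPow k n) := fun k n =>
    RealRMK.integral_rieszMeasure Λ _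
  have hcint : ∀ k n, Integrable (cutPow k n) M := fun k n =>
    (cutPow k n).continuous.integrable_of_hasCompactSupport (cutPow k n).hasCompactSupport
  have heven : ∀ n, Integrable (fun x : ℝ => x ^ (2 * n)) M := by
    intro n
    refine ⟨(continuous_pow _).aestronglyMeasurable, ?_⟩
    have hnn : ∀ x : ℝ, 0 ≤ x ^ (2 * n) := fun x => by rw [pow_mul]; positivity
    rw [hasFiniteIntegral_iff_ofReal (ae_of_all _ hnn)]
    have hle : ∫⁻ x, ENNReal.ofReal (x ^ (2 * n)) ∂M ≤ ENNReal.ofReal (L (X ^ (2 * n))) := by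
      -- Fatou's lemma along the truncations, each of which has integral at most `L (X ^ (2 * n))`.
      calc ∫⁻ x, ENNReal.ofReal (x ^ (2 * n)) ∂M
          = ∫⁻ x, liminf (fun k => ENNReal.ofReal (cutPow k (2 * n) x)) atTop ∂M := by
            refine lintegral_congr fun x => Eq.symm (Tendsto.liminf_eq ?_)
            exact (ENNReal.continuous_ofReal.tendsto _).comp (tendsto_cutPow (2 * n) x)
        _ ≤ liminf (fun k => ∫⁻ x, ENNReal.ofReal (cutPow k (2 * n) x) ∂M) atTop :=
            lintegral_liminf_le fun k =>
              ENNReal.measurable_ofReal.comp (cutPow k (2 * n)).continuous.measurable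
        _ ≤ ENNReal.ofReal (L (X ^ (2 * n))) := by
            refine liminf_le_of_le (by isBoundedDefault) fun b hb => ?_
            obtain ⟨k, hk⟩ := hb.exists
            refine hk.trans ?_
            rw [← ofReal_integral_eq_lintegral_ofReal (hcint k _)
              (ae_of_all _ fun x => mul_nonneg (cutoff_nonneg k x) (hnn x)), hM]
            refine ENNReal.ofReal_le_ofReal (hΛ _ _ fun x => ?_)
            simpa using mul_le_of_le_one_left (hnn x) (cutoff_le_one k x)
    exact hle.trans_lt ENNReal.ofReal_lt_top
  have hpow_int : ∀ n, Integrable (fun x : ℝ => x ^ n) M := by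
    intro n
    -- `|x ^ n| ≤ 1 + x ^ (2 * n)`
    refine ((heven 0).add (heven n)).mono' (continuous_pow _).aestronglyMeasurable
      (ae_of_all _ fun x => ?_)
    simp only [Real.norm_eq_abs, Pi.add_apply, mul_zero, pow_zero, mul_comm 2 n, pow_mul]
    rw [abs_le]
    constructor <;> nlinarith [sq_nonneg (x ^ n + 1), sq_nonneg (x ^ n - 1)]
  refine ⟨M, fun n => ⟨hpow_int n, ?_⟩⟩
  have h1 : Tendsto (fun k => Λ (cutPow k n)) atTop (nhds (∫ x, x ^ n ∂M)) := by
    simp_rw [← hM]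
    refine tendsto_integral_of_dominated_convergence (fun x => |x ^ n|)
      (fun k => (hcint k n).aestronglyMeasurable) (hpow_int n).abs (fun k => ae_of_all _ fun x => ?_)
      (ae_of_all _ fun x => tendsto_cutPow n x)
    rw [cutPow_apply, norm_mul, Real.norm_eq_abs, Real.norm_eq_abs,
      abs_of_nonneg (cutoff_nonneg k x)]
    exact mul_le_of_le_one_left (abs_nonneg _) (cutoff_le_one k x)
  have h2 : Tendsto (fun k => Λ (cutPow k n)) atTop (nhds (L (X ^ n))) := by
    rw [tendsto_iff_norm_sub_tendsto_zero]
    have hlim : Tendsto (fun k : ℕ => (k : ℝ)⁻¹ * L (X ^ (2 * n + 2))) atTop (nhds 0) := by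
      simpa using tendsto_inv_atTop_nhds_zero_nat.mul_const (L (X ^ (2 * n + 2)))
    refine squeeze_zero' (Eventually.of_forall fun k => norm_nonneg _) ?_ hlim
    filter_upwards [eventually_ge_atTop 1] with k hk
    have hup := hΛ (cutPow k n) (X ^ n + (k : ℝ)⁻¹ • X ^ (2 * n + 2)) fun x => by
      have := (abs_le.mp (abs_pow_sub_cutPow_le hk n x)).1
      simp only [eval_add, eval_smul, eval_pow, eval_X, smul_eq_mul]
      linarith
    have hlow := hΛ (-cutPow k n) (-X ^ n + (k : ℝ)⁻¹ • X ^ (2 * n + 2)) fun x => by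
      have := (abs_le.mp (abs_pow_sub_cutPow_le hk n x)).2
      simp only [eval_add, eval_smul, eval_pow, eval_X, smul_eq_mul, eval_neg,
        CompactlySupportedContinuousMap.coe_neg, Pi.neg_apply]
      linarith
    simp only [map_add, map_smul, map_neg, smul_eq_mul] at hup hlow
    rw [Real.norm_eq_abs, abs_le]
    constructor <;> linarith
  exact tendsto_nhds_unique h1 h2

/-! ### Hamburger's theorem -/

/-- **Hamburger's theorem** on the power moment problem: the Hankel form is non-negative if and
only if the `qₙ` are the power moments of a non-negative Borel measure on `ℝ`. -/
theorem hamburger (q : ℕ → ℂ) :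
    (∀ g : ℕ →₀ ℂ, 0 ≤ hankelForm q g) ↔
    ∃ M : Measure ℝ, ∀ n : ℕ,
      Integrable (fun x : ℝ => x ^ n) M ∧ q n = ((∫ x, x ^ n ∂M : ℝ) : ℂ) := by
  refine ⟨fun hq => ?_, fun ⟨M, hM⟩ => hankelForm_nonneg_of_moments q M hM⟩
  obtain ⟨M, hM⟩ := exists_measure_of_positive (momentFunctional fun n => (q n).re) fun p hp => by
    obtain ⟨a, b, rfl⟩ := exists_sum_sq_of_nonneg _ p le_rfl hp
    rw [map_add]
    exact add_nonneg (momentFunctional_sq q hq a) (momentFunctional_sq q hq b)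
  refine ⟨M, fun n => ⟨(hM n).1, ?_⟩⟩
  rw [(hM n).2, ← monomial_one_right_eq_X_pow, momentFunctional_monomial, mul_one]
  exact Complex.ext rfl (by simp [im_eq_zero q hq n])
end
end
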